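/- arXiv:1010.4158 — 4 statements merged into one kernel-verified Lean document; each statement's English description precedes it below -/
import Mathlib

section
/- Let m:ℝ²→ℂ be measurable and locally bounded. For i=1,2 suppose the exponents satisfy either 1<p_i,q_i<∞ or (p_i=1 and q_i=∞), let 0<p₃,q₃<∞, and define p by 1/p=1/p₁+1/p₂−1/p₃. If there is a constant C>0 such that ‖D_{m̃_{t,p}}(a,b)‖_{ℓ^{p₃,q₃}(ℤ)} ≤ C‖a‖_{ℓ^{p₁,q₁}(ℤ)}‖b‖_{ℓ^{p₂,q₂}(ℤ)} for every t>0 and all finitely supported sequences a,b, then there is a constant C'>0, depending only on C and the exponents, such that ‖C_m(f,g)‖_{L^{p₃,q₃}(ℝ)} ≤ C'‖f‖_{L^{p₁,q₁}(ℝ)}‖g‖_{L^{p₂,q₂}(ℝ)} for all Schwartz functions f,g with compactly supported Fourier transform. -/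
open MeasureTheory Complex SchwartzMap Filter
open scoped FourierTransform ENNReal NNReal Real

/-- The distribution function of an `ℝ≥0∞`-valued function. -/
noncomputable def distFn {X : Type*} [MeasurableSpace X] (μ : Measure X)
    (f : X → ℝ≥0∞) (t : ℝ) : ℝ≥0∞ :=
  μ {x | ENNReal.ofReal t < f x}

/-- The Lorentz `L^{p,q}` quasinorm, defined via the distribution function. -/
noncomputable def lorentzNorm {X : Type*} [MeasurableSpace X] (μ : Measure X)
    (p q : ℝ≥0∞) (f : X → ℝ≥0∞) : ℝ≥0∞ :=
  if q = ∞ then ⨆ t ∈ Set.Ioi (0 : ℝ), ENNReal.ofReal t * distFn μ f t ^ (1 / p.toReal)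
  else (q * ∫⁻ t in Set.Ioi (0 : ℝ),
      ENNReal.ofReal (t ^ (q.toReal - 1)) * distFn μ f t ^ (q.toReal / p.toReal)) ^ (1 / q.toReal)

/-- The Lorentz `L^{p,q}` quasinorm of a complex-valued function. -/
noncomputable def lorentzNormC {X : Type*} [MeasurableSpace X] (μ : Measure X)
    (p q : ℝ≥0∞) (f : X → ℂ) : ℝ≥0∞ :=
  lorentzNorm μ p q fun x => (‖f x‖₊ : ℝ≥0∞)

/-- A function is locally bounded if it is bounded on every compact set. -/
def LocallyBounded (m : ℝ × ℝ → ℂ) : Prop :=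
  ∀ K : Set (ℝ × ℝ), IsCompact K → ∃ C : ℝ, ∀ z ∈ K, ‖m z‖ ≤ C

/-- The bilinear multiplier operator `C_m`. -/
noncomputable def Cm (m : ℝ × ℝ → ℂ) (f g : 𝓢(ℝ, ℂ)) (x : ℝ) : ℂ :=
  ∫ ξ : ℝ, ∫ η : ℝ, 𝓕 (f : ℝ → ℂ) ξ * 𝓕 (g : ℝ → ℂ) η * m (ξ, η) *
    Complex.exp (2 * Real.pi * Complex.I * (x : ℂ) * ((ξ : ℂ) + (η : ℂ)))

/-- The trigonometric polynomial with coefficients `a`. -/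
noncomputable def trigP (a : ℤ → ℂ) (ξ : ℝ) : ℂ :=
  ∑ᶠ k : ℤ, a k * Complex.exp (-(2 * Real.pi) * Complex.I * (k : ℂ) * (ξ : ℂ))

/-- The discrete bilinear operator `D_{m̃_{t,p}}`. -/
noncomputable def Dop (m : ℝ × ℝ → ℂ) (t p : ℝ) (a b : ℤ → ℂ) (n : ℤ) : ℂ :=
  ((t ^ (1 / p) : ℝ) : ℂ) *
    ∫ ξ in Set.Icc (-(1/2) : ℝ) (1/2), ∫ η in Set.Icc (-(1/2) : ℝ) (1/2),
      trigP a ξ * trigP b η * m (t * ξ, t * η) *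
        Complex.exp (2 * Real.pi * Complex.I * (n : ℂ) * ((ξ : ℂ) + (η : ℂ)))

/-- `InER R f` : `f` is (a representative of) a tempered distribution of exponential type,
i.e. a continuous function of polynomial growth whose distributional Fourier transform is
supported in `[-R, R]`. -/
def InER (R : ℝ) (f : ℝ → ℂ) : Prop :=
  Continuous f ∧ (∃ (C : ℝ) (k : ℕ), ∀ x : ℝ, ‖f x‖ ≤ C * (1 + |x|) ^ k) ∧
  ∀ φ : 𝓢(ℝ, ℂ), Disjoint (tsupport (φ : ℝ → ℂ)) (Set.Icc (-R) R) →
    ∫ x : ℝ, f x * 𝓕 (φ : ℝ → ℂ) x = 0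

/-- The discrete bilinear Hilbert transform. -/
noncomputable def bhtZ (α : ℤ) (a b : ℤ → ℂ) (n : ℤ) : ℂ :=
  ((Real.pi : ℂ))⁻¹ * ∑ᶠ (k : ℤ) (_ : k ≠ 0), a (n - k) * b (n - α * k) * (k : ℂ)⁻¹

/-- `sinc x = sin (π x) / (π x)`, with `sinc 0 = 1`. -/
noncomputable def mySinc (x : ℝ) : ℝ :=
  if x = 0 then 1 else Real.sin (Real.pi * x) / (Real.pi * x)

/-!
Fix `f` and `g` with compactly supported Fourier transforms. By Poisson summation, once `t` exceeds
twice the bandwidth of `f` and `g`, the trigonometric series of the samples `f (k / t)` is `t * 𝓕 f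
(t * ξ)` on `[-1/2, 1/2]`, without aliasing. Hence `D_{m̃_{t,p}}` sends the samples of `f` and `g`
on `t⁻¹ ℤ` exactly to `t ^ (1/p)` times the samples of `C_m (f, g)`. A sequence on `t⁻¹ ℤ` is a
step function on `ℝ` whose Lorentz quasinorm is `t ^ (-1/p)` times that of the sequence, so by the
relation between the exponents the discrete bound becomes a bound for step functions in which all
powers of `t` cancel.

As `t → ∞` the step functions of `f` and `g` converge in quasinorm: they differ from `f` and `g` by
`t⁻¹` times a rapidly decreasing envelope, and the quasi-triangle inequality can be weighted so that
its constant tends to `1` on the main term. For `C_m (f, g)` Fatou's lemma suffices, and the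
constant of the discrete bound is preserved.
-/

open scoped Topology

section DistFn

variable {X : Type*} [MeasurableSpace X] {μ : Measure X}

theorem distFn_mono {u v : X → ℝ≥0∞} (h : u ≤ v) (t : ℝ) : distFn μ u t ≤ distFn μ v t :=
  measure_mono fun x hx => lt_of_lt_of_le hx (h x)

theorem distFn_antitone (u : X → ℝ≥0∞) : Antitone (distFn μ u) := fun _ _ hst =>
  measure_mono fun _ hx => lt_of_le_of_lt (ENNReal.ofReal_le_ofReal hst) hx

theorem measurable_distFn (u : X → ℝ≥0∞) : Measurable (distFn μ u) :=
  (distFn_antitone u).measurable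

theorem distFn_const_mul {c : ℝ} (hc : 0 < c) (u : X → ℝ≥0∞) (t : ℝ) :
    distFn μ (fun x => ENNReal.ofReal c * u x) t = distFn μ u (t / c) := by
  have hc₀ : ENNReal.ofReal c ≠ 0 := by simpa using hc
  simp only [distFn, ENNReal.ofReal_div_of_pos hc, mul_comm (ENNReal.ofReal c),
    ENNReal.div_lt_iff (.inl hc₀) (.inl ENNReal.ofReal_ne_top)]

-- If `u ≤ t / c` and `v ≤ t / d`, then `u + v ≤ t (c⁻¹ + d⁻¹) = t`.
theorem distFn_add_le {c d : ℝ} (hcd : c.HolderConjugate d) (u v : X → ℝ≥0∞) (t : ℝ) :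
    distFn μ (fun x => u x + v x) t ≤
      distFn μ (fun x => ENNReal.ofReal c * u x) t +
        distFn μ (fun x => ENNReal.ofReal d * v x) t := by
  rw [distFn_const_mul hcd.pos, distFn_const_mul hcd.symm.pos]
  refine (measure_mono fun x hx => ?_).trans (measure_union_le _ _)
  by_contra! hle
  simp only [Set.mem_union, Set.mem_ofPred_eq, not_or, not_lt] at hle hx
  refine hx.not_ge ((add_le_add hle.1 hle.2).trans ?_)
  rcases le_total 0 t with ht | ht
  · rw [← ENNReal.ofReal_add (div_nonneg ht hcd.nonneg) (div_nonneg ht hcd.symm.nonneg),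
      div_eq_mul_inv, div_eq_mul_inv, ← mul_add, hcd.inv_add_inv_eq_one, mul_one]
  · simp [ENNReal.ofReal_of_nonpos, div_nonpos_of_nonpos_of_nonneg ht hcd.nonneg,
      div_nonpos_of_nonpos_of_nonneg ht hcd.symm.nonneg]

theorem distFn_liminf_le (F : ℕ → X → ℝ≥0∞) (t : ℝ) :
    distFn μ (fun x => liminf (fun j => F j x) atTop) t ≤
      liminf (fun j => distFn μ (F j) t) atTop := by
  have hsub : {x | ENNReal.ofReal t < liminf (fun j => F j x) atTop} ⊆
      ⋃ n, ⋂ j ≥ n, {x | ENNReal.ofReal t < F j x} := fun x hx => by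
    have hx' : ENNReal.ofReal t < liminf (fun j => F j x) atTop := hx
    simpa using eventually_atTop.1 (eventually_lt_of_lt_liminf hx')
  have hmono : Monotone fun n => ⋂ j ≥ n, {x | ENNReal.ofReal t < F j x} := fun m n hmn =>
    Set.biInter_subset_biInter_left fun j hj => le_trans hmn hj
  calc distFn μ (fun x => liminf (fun j => F j x) atTop) t
      ≤ μ (⋃ n, ⋂ j ≥ n, {x | ENNReal.ofReal t < F j x}) := measure_mono hsub
    _ = ⨆ n, μ (⋂ j ≥ n, {x | ENNReal.ofReal t < F j x}) := hmono.measure_iUnion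
    _ ≤ ⨆ n, ⨅ j ≥ n, distFn μ (F j) t :=
        iSup_mono fun n => le_iInf₂ fun j hj => measure_mono (Set.biInter_subset_of_mem hj)
    _ = liminf (fun j => distFn μ (F j) t) atTop := liminf_eq_iSup_iInf_of_nat.symm

end DistFn

/-- The measure `q t^(q-1) dt = d(t^q)` on `(0, ∞)`, for `q < ∞`: the weight in the Lorentz
quasinorm with second exponent `q`. -/
noncomputable def layerMeasure (q : ℝ≥0∞) : Measure ℝ :=
  (volume.restrict (Set.Ioi 0)).withDensity fun t => q * ENNReal.ofReal (t ^ (q.toReal - 1))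

theorem lintegral_layerMeasure (q : ℝ≥0∞) {h : ℝ → ℝ≥0∞} (hh : Measurable h) :
    ∫⁻ t, h t ∂layerMeasure q =
      q * ∫⁻ t in Set.Ioi 0, ENNReal.ofReal (t ^ (q.toReal - 1)) * h t := by
  rw [layerMeasure, lintegral_withDensity_eq_lintegral_mul _ (by fun_prop) hh,
    ← lintegral_const_mul _ (by fun_prop)]
  simp only [Pi.mul_apply, mul_assoc]

theorem lintegral_Ioi_zero_comp_div {c : ℝ} (hc : 0 < c) (h : ℝ → ℝ≥0∞) :
    ∫⁻ t in Set.Ioi 0, h (t / c) = ENNReal.ofReal c * ∫⁻ t in Set.Ioi 0, h t := by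
  have himage : (fun t => c * t) '' Set.Ioi 0 = Set.Ioi 0 := by
    simpa using Set.image_mul_left_Ioi hc 0
  have hsubst := lintegral_image_eq_lintegral_abs_deriv_mul (s := Set.Ioi 0)
    (f := fun t => c * t) (f' := fun _ => c) measurableSet_Ioi
    (fun x _ => by simpa using ((hasDerivAt_id x).const_mul c).hasDerivWithinAt)
    (mul_right_injective₀ hc.ne').injOn fun t => h (t / c)
  rw [himage] at hsubst
  rw [hsubst, abs_of_pos hc, lintegral_const_mul' _ _ ENNReal.ofReal_ne_top]
  simp only [mul_div_cancel_left₀ _ hc.ne']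

theorem lintegral_layerMeasure_comp_div (q : ℝ≥0∞) {c : ℝ} (hc : 0 < c) {h : ℝ → ℝ≥0∞}
    (hh : Measurable h) :
    ∫⁻ t, h (t / c) ∂layerMeasure q =
      ENNReal.ofReal c ^ q.toReal * ∫⁻ t, h t ∂layerMeasure q := by
  have hweight : ∀ t ∈ Set.Ioi (0 : ℝ), ENNReal.ofReal (t ^ (q.toReal - 1)) * h (t / c) =
      ENNReal.ofReal (c ^ (q.toReal - 1)) *
        (ENNReal.ofReal ((t / c) ^ (q.toReal - 1)) * h (t / c)) := fun t ht => by
    rw [← mul_assoc, ← ENNReal.ofReal_mul (by positivity),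
      ← Real.mul_rpow hc.le (div_nonneg (le_of_lt ht) hc.le), mul_div_cancel₀ _ hc.ne']
  have hc' : ENNReal.ofReal (c ^ (q.toReal - 1)) * ENNReal.ofReal c =
      ENNReal.ofReal c ^ q.toReal := by
    rw [← ENNReal.ofReal_mul (by positivity), ← Real.rpow_add_one hc.ne', sub_add_cancel,
      ENNReal.ofReal_rpow_of_pos hc]
  rw [lintegral_layerMeasure q (by fun_prop), lintegral_layerMeasure q hh,
    setLIntegral_congr_fun measurableSet_Ioi hweight,
    lintegral_const_mul' _ _ ENNReal.ofReal_ne_top,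
    lintegral_Ioi_zero_comp_div hc fun t => ENNReal.ofReal (t ^ (q.toReal - 1)) * h t,
    ← mul_assoc (ENNReal.ofReal _), hc', mul_left_comm]

section LorentzNorm

variable {X : Type*} [MeasurableSpace X] {μ : Measure X} {p q : ℝ≥0∞}

theorem lorentzNorm_top (μ : Measure X) (p : ℝ≥0∞) (u : X → ℝ≥0∞) :
    lorentzNorm μ p ∞ u = ⨆ t ∈ Set.Ioi (0 : ℝ), ENNReal.ofReal t * distFn μ u t ^ (1 / p.toReal) :=
  if_pos rfl

theorem lorentzNorm_of_ne_top (hq : q ≠ ∞) (u : X → ℝ≥0∞) :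
    lorentzNorm μ p q u =
      (∫⁻ t, distFn μ u t ^ (q.toReal / p.toReal) ∂layerMeasure q) ^ (1 / q.toReal) := by
  rw [lorentzNorm, if_neg hq, lintegral_layerMeasure q ((measurable_distFn u).pow_const _)]

theorem lorentzNorm_mono {u v : X → ℝ≥0∞} (h : u ≤ v) :
    lorentzNorm μ p q u ≤ lorentzNorm μ p q v := by
  unfold lorentzNorm
  split_ifs <;> gcongr <;> exact distFn_mono h _

theorem lorentzNorm_const_mul (hq : q ≠ 0) {c : ℝ} (hc : 0 < c) (u : X → ℝ≥0∞) :
    lorentzNorm μ p q (fun x => ENNReal.ofReal c * u x) =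
      ENNReal.ofReal c * lorentzNorm μ p q u := by
  rcases eq_or_ne q ∞ with rfl | hq'
  · simp only [lorentzNorm_top, distFn_const_mul hc, ENNReal.mul_iSup]
    refine le_antisymm (iSup₂_le fun t ht => le_iSup₂_of_le (t / c) (div_pos ht hc) ?_)
      (iSup₂_le fun t ht => le_iSup₂_of_le (c * t) (mul_pos hc ht) ?_)
    · rw [← mul_assoc, ← ENNReal.ofReal_mul hc.le, mul_div_cancel₀ _ hc.ne']
    · rw [← mul_assoc, ← ENNReal.ofReal_mul hc.le, mul_div_cancel_left₀ _ hc.ne']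
  · simp only [lorentzNorm_of_ne_top hq', distFn_const_mul hc]
    rw [lintegral_layerMeasure_comp_div q hc ((measurable_distFn u).pow_const _),
      ENNReal.mul_rpow_of_nonneg _ _ (by positivity), ← ENNReal.rpow_mul,
      mul_one_div_cancel (ENNReal.toReal_pos hq hq').ne', ENNReal.rpow_one]

theorem distFn_smul_measure (c : ℝ≥0∞) (u : X → ℝ≥0∞) (t : ℝ) :
    distFn (c • μ) u t = c * distFn μ u t := rfl

theorem lorentzNorm_smul_measure (hq : q ≠ 0) (c : ℝ≥0∞) (u : X → ℝ≥0∞) :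
    lorentzNorm (c • μ) p q u = c ^ (1 / p.toReal) * lorentzNorm μ p q u := by
  rcases eq_or_ne q ∞ with rfl | hq'
  · simp only [lorentzNorm_top, distFn_smul_measure, ENNReal.mul_iSup]
    refine iSup_congr fun t => iSup_congr fun _ => ?_
    rw [ENNReal.mul_rpow_of_nonneg _ _ (by positivity), mul_left_comm]
  · have hexp : q.toReal / p.toReal * (1 / q.toReal) = 1 / p.toReal := by
      rw [div_mul_div_comm, mul_one, mul_comm, ← div_div, div_self (ENNReal.toReal_pos hq hq').ne']
    simp only [lorentzNorm_of_ne_top hq', distFn_smul_measure]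
    simp_rw [ENNReal.mul_rpow_of_nonneg _ _ (show 0 ≤ q.toReal / p.toReal by positivity)]
    rw [lintegral_const_mul _ ((measurable_distFn u).pow_const _),
      ENNReal.mul_rpow_of_nonneg _ _ (by positivity), ← ENNReal.rpow_mul, hexp]

theorem lorentzNorm_comp_measurePreserving {Y : Type*} [MeasurableSpace Y] {ν : Measure Y}
    {φ : X → Y} (hφ : MeasurePreserving φ μ ν) {u : Y → ℝ≥0∞} (hu : Measurable u) :
    lorentzNorm μ p q (fun x => u (φ x)) = lorentzNorm ν p q u := by
  have hdist : distFn μ (fun x => u (φ x)) = distFn ν u := funext fun t =>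
    hφ.measure_preimage (measurableSet_lt measurable_const hu).nullMeasurableSet
  simp only [lorentzNorm, hdist]

theorem lorentzNorm_liminf_le (hq : q ≠ 0) (F : ℕ → X → ℝ≥0∞) :
    lorentzNorm μ p q (fun x => liminf (fun j => F j x) atTop) ≤
      liminf (fun j => lorentzNorm μ p q (F j)) atTop := by
  have hrpow : ∀ {r : ℝ} (_ : 0 ≤ r) (G : ℕ → ℝ≥0∞),
      (liminf G atTop) ^ r = liminf (fun j => G j ^ r) atTop := fun hr G =>
    (ENNReal.monotone_rpow_of_nonneg hr).map_liminf_of_continuousAt G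
      ENNReal.continuous_rpow_const.continuousAt
  rcases eq_or_ne q ∞ with rfl | hq'
  · simp only [lorentzNorm_top]
    refine iSup₂_le fun t ht => ?_
    calc ENNReal.ofReal t * distFn μ (fun x => liminf (fun j => F j x) atTop) t ^ (1 / p.toReal)
        ≤ ENNReal.ofReal t * liminf (fun j => distFn μ (F j) t ^ (1 / p.toReal)) atTop := by
          rw [← hrpow (by positivity)]
          gcongr
          exact distFn_liminf_le F t
      _ = liminf (fun j => ENNReal.ofReal t * distFn μ (F j) t ^ (1 / p.toReal)) atTop :=
          (ENNReal.liminf_const_mul_of_ne_top ENNReal.ofReal_ne_top).symm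
      _ ≤ _ := liminf_le_liminf (.of_forall fun j => le_iSup₂_of_le t ht le_rfl)
  · simp only [lorentzNorm_of_ne_top hq']
    rw [← hrpow (by positivity)]
    refine ENNReal.rpow_le_rpow ?_ (by positivity)
    refine (lintegral_mono fun t => ?_).trans
      (lintegral_liminf_le fun j => (measurable_distFn (F j)).pow_const _)
    rw [← hrpow (by positivity)]
    exact ENNReal.rpow_le_rpow (distFn_liminf_le F t) (by positivity)

theorem lorentzNorm_top_rpow_le_add {u v w : X → ℝ≥0∞} (hp : p ≠ 0) (hp' : p ≠ ∞)
    (h : ∀ t, distFn μ w t ≤ distFn μ u t + distFn μ v t) :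
    lorentzNorm μ p ∞ w ^ p.toReal ≤
      lorentzNorm μ p ∞ u ^ p.toReal + lorentzNorm μ p ∞ v ^ p.toReal := by
  have hp₀ : 0 < p.toReal := ENNReal.toReal_pos hp hp'
  have hpow : ∀ (t : ℝ) (f : X → ℝ≥0∞),
      (ENNReal.ofReal t * distFn μ f t ^ (1 / p.toReal)) ^ p.toReal =
        ENNReal.ofReal t ^ p.toReal * distFn μ f t := fun t f => by
    rw [ENNReal.mul_rpow_of_nonneg _ _ hp₀.le, ← ENNReal.rpow_mul, one_div_mul_cancel hp₀.ne',
      ENNReal.rpow_one]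
  have hle : ∀ t ∈ Set.Ioi (0 : ℝ), ∀ f : X → ℝ≥0∞,
      ENNReal.ofReal t ^ p.toReal * distFn μ f t ≤ lorentzNorm μ p ∞ f ^ p.toReal :=
    fun t ht f => by
    rw [← hpow, lorentzNorm_top]
    exact ENNReal.rpow_le_rpow (le_iSup₂_of_le t ht le_rfl) hp₀.le
  rw [← ENNReal.le_rpow_inv_iff hp₀, lorentzNorm_top]
  refine iSup₂_le fun t ht => ?_
  rw [ENNReal.le_rpow_inv_iff hp₀, hpow]
  calc ENNReal.ofReal t ^ p.toReal * distFn μ w t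
      ≤ ENNReal.ofReal t ^ p.toReal * distFn μ u t +
          ENNReal.ofReal t ^ p.toReal * distFn μ v t := by
        rw [← mul_add]
        gcongr
        exact h t
    _ ≤ _ := add_le_add (hle t ht u) (hle t ht v)

theorem lorentzNorm_rpow_le_add_of_le {u v w : X → ℝ≥0∞} (hq : q ≠ 0) (hqp : q ≤ p)
    (hp' : p ≠ ∞) (h : ∀ t, distFn μ w t ≤ distFn μ u t + distFn μ v t) :
    lorentzNorm μ p q w ^ q.toReal ≤
      lorentzNorm μ p q u ^ q.toReal + lorentzNorm μ p q v ^ q.toReal := by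
  have hq' : q ≠ ∞ := ne_top_of_le_ne_top hp' hqp
  have hpow : ∀ f : X → ℝ≥0∞, lorentzNorm μ p q f ^ q.toReal =
      ∫⁻ t, distFn μ f t ^ (q.toReal / p.toReal) ∂layerMeasure q := fun f => by
    rw [lorentzNorm_of_ne_top hq', ← ENNReal.rpow_mul,
      one_div_mul_cancel (ENNReal.toReal_pos hq hq').ne', ENNReal.rpow_one]
  rw [hpow, hpow, hpow, ← lintegral_add_left ((measurable_distFn u).pow_const _)]
  refine lintegral_mono fun t => ?_
  calc distFn μ w t ^ (q.toReal / p.toReal)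
      ≤ (distFn μ u t + distFn μ v t) ^ (q.toReal / p.toReal) :=
        ENNReal.rpow_le_rpow (h t) (by positivity)
    _ ≤ _ := ENNReal.rpow_add_le_add_rpow _ _ (by positivity)
        (div_le_one_of_le₀ (ENNReal.toReal_mono hp' hqp) (by positivity))

theorem lorentzNorm_rpow_le_add_of_ge {u v w : X → ℝ≥0∞} (hp : p ≠ 0) (hpq : p ≤ q)
    (hq' : q ≠ ∞) (h : ∀ t, distFn μ w t ≤ distFn μ u t + distFn μ v t) :
    lorentzNorm μ p q w ^ p.toReal ≤
      lorentzNorm μ p q u ^ p.toReal + lorentzNorm μ p q v ^ p.toReal := by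
  have hp₀ : 0 < p.toReal := ENNReal.toReal_pos hp (ne_top_of_le_ne_top hq' hpq)
  have hr : 1 ≤ q.toReal / p.toReal := (one_le_div hp₀).2 (ENNReal.toReal_mono hq' hpq)
  have hpow : ∀ f : X → ℝ≥0∞, lorentzNorm μ p q f ^ p.toReal =
      (∫⁻ t, distFn μ f t ^ (q.toReal / p.toReal) ∂layerMeasure q) ^
        (1 / (q.toReal / p.toReal)) := fun f => by
    rw [lorentzNorm_of_ne_top hq', ← ENNReal.rpow_mul, one_div_mul_eq_div, one_div_div]
  rw [hpow, hpow, hpow]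
  calc (∫⁻ t, distFn μ w t ^ (q.toReal / p.toReal) ∂layerMeasure q) ^ (1 / (q.toReal / p.toReal))
      ≤ (∫⁻ t, (distFn μ u + distFn μ v) t ^ (q.toReal / p.toReal) ∂layerMeasure q) ^
          (1 / (q.toReal / p.toReal)) := by
        gcongr with t
        exact h t
    _ ≤ _ := ENNReal.lintegral_Lp_add_le (measurable_distFn u).aemeasurable
        (measurable_distFn v).aemeasurable hr

theorem lorentzNorm_rpow_le_add {u v w : X → ℝ≥0∞} (hp : p ≠ 0) (hp' : p ≠ ∞) (hq : q ≠ 0)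
    (h : ∀ t, distFn μ w t ≤ distFn μ u t + distFn μ v t) :
    lorentzNorm μ p q w ^ (min p q).toReal ≤
      lorentzNorm μ p q u ^ (min p q).toReal + lorentzNorm μ p q v ^ (min p q).toReal := by
  rcases le_total q p with hqp | hpq
  · simpa only [min_eq_right hqp] using lorentzNorm_rpow_le_add_of_le hq hqp hp' h
  · rw [min_eq_left hpq]
    rcases eq_or_ne q ∞ with rfl | hq'
    · exact lorentzNorm_top_rpow_le_add hp hp' h
    · exact lorentzNorm_rpow_le_add_of_ge hp hpq hq' h

theorem lorentzNorm_add_rpow_le (hp : p ≠ 0) (hp' : p ≠ ∞) (hq : q ≠ 0) {c d : ℝ}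
    (hcd : c.HolderConjugate d) (u v : X → ℝ≥0∞) :
    lorentzNorm μ p q (fun x => u x + v x) ^ (min p q).toReal ≤
      (ENNReal.ofReal c * lorentzNorm μ p q u) ^ (min p q).toReal +
        (ENNReal.ofReal d * lorentzNorm μ p q v) ^ (min p q).toReal := by
  rw [← lorentzNorm_const_mul hq hcd.pos, ← lorentzNorm_const_mul hq hcd.symm.pos]
  exact lorentzNorm_rpow_le_add hp hp' hq (distFn_add_le hcd u v)

-- The choice `d = (√ε)⁻¹` makes both terms of `lorentzNorm_add_rpow_le` converge as `ε → 0`.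
theorem lorentzNorm_add_const_mul_rpow_le (hp : p ≠ 0) (hp' : p ≠ ∞) (hq : q ≠ 0) {ε : ℝ}
    (hε : 0 < ε) (hε' : ε < 1) (u v : X → ℝ≥0∞) :
    lorentzNorm μ p q (fun x => u x + ENNReal.ofReal ε * v x) ^ (min p q).toReal ≤
      (ENNReal.ofReal (1 - √ε)⁻¹ * lorentzNorm μ p q u) ^ (min p q).toReal +
        (ENNReal.ofReal √ε * lorentzNorm μ p q v) ^ (min p q).toReal := by
  have hδ : 0 < √ε := Real.sqrt_pos.2 hε
  have hδ' : √ε < 1 := by simpa using Real.sqrt_lt_sqrt hε.le hε'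
  refine (lorentzNorm_add_rpow_le hp hp' hq (.one_sub_inv_inv hδ hδ') u _).trans_eq ?_
  rw [lorentzNorm_const_mul hq hε, ← mul_assoc, ← ENNReal.ofReal_mul (inv_nonneg.2 hδ.le),
    inv_mul_eq_div, Real.div_sqrt]

theorem tendsto_lorentzNorm_add_const_mul (hp : p ≠ 0) (hp' : p ≠ ∞) (hq : q ≠ 0)
    (u : X → ℝ≥0∞) {v : X → ℝ≥0∞} (hv : lorentzNorm μ p q v ≠ ∞) :
    Tendsto (fun ε : ℝ => lorentzNorm μ p q fun x => u x + ENNReal.ofReal ε * v x) (𝓝[>] 0)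
      (𝓝 (lorentzNorm μ p q u)) := by
  set s := (min p q).toReal
  have hs : 0 < s :=
    ENNReal.toReal_pos (by simp [hp, hq]) (ne_top_of_le_ne_top hp' (min_le_left _ _))
  have hsqrt : Tendsto Real.sqrt (𝓝[>] 0) (𝓝 0) := by
    simpa using (Real.continuous_sqrt.tendsto 0).mono_left nhdsWithin_le_nhds
  have hc : Tendsto (fun ε => ENNReal.ofReal (1 - √ε)⁻¹) (𝓝[>] 0) (𝓝 1) := by
    simpa using ENNReal.tendsto_ofReal ((hsqrt.const_sub 1).inv₀ (by simp))
  have hd : Tendsto (fun ε => ENNReal.ofReal √ε) (𝓝[>] 0) (𝓝 0) := by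
    simpa using ENNReal.tendsto_ofReal hsqrt
  have hbound : Tendsto (fun ε => ((ENNReal.ofReal (1 - √ε)⁻¹ * lorentzNorm μ p q u) ^ s +
      (ENNReal.ofReal √ε * lorentzNorm μ p q v) ^ s) ^ s⁻¹) (𝓝[>] 0) (𝓝 (lorentzNorm μ p q u)) := by
    have hsum := (((ENNReal.Tendsto.mul_const (b := lorentzNorm μ p q u) hc
      (.inl one_ne_zero)).ennrpow_const s).add
        ((ENNReal.Tendsto.mul_const hd (.inr hv)).ennrpow_const s)).ennrpow_const s⁻¹
    simpa [ENNReal.zero_rpow_of_pos hs, ENNReal.rpow_rpow_inv hs.ne'] using hsum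
  refine tendsto_of_tendsto_of_tendsto_of_le_of_le' tendsto_const_nhds hbound
    (.of_forall fun ε => lorentzNorm_mono fun x => le_self_add) ?_
  filter_upwards [Ioo_mem_nhdsGT one_pos] with ε hε
  exact (ENNReal.le_rpow_inv_iff hs).2 (lorentzNorm_add_const_mul_rpow_le hp hp' hq hε.1 hε.2 u v)

theorem distFn_le_lintegral_rpow_mul {u : X → ℝ≥0∞} (hu : Measurable u) {a : ℝ} (ha : 0 < a)
    {t : ℝ} (ht : 0 < t) :
    distFn μ u t ≤ (∫⁻ x, u x ^ a ∂μ) * ENNReal.ofReal (t ^ (-a)) := by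
  have hta : ENNReal.ofReal t ^ a ≠ 0 := by simp [ht]
  rw [Real.rpow_neg ht.le, ENNReal.ofReal_inv_of_pos (by positivity),
    ← ENNReal.ofReal_rpow_of_pos ht, ← div_eq_mul_inv]
  calc distFn μ u t ≤ μ {x | ENNReal.ofReal t ^ a ≤ u x ^ a} :=
        measure_mono fun x hx => ENNReal.rpow_le_rpow (le_of_lt hx) ha.le
    _ ≤ _ := meas_ge_le_lintegral_div (hu.pow_const a).aemeasurable hta (by simp [ha.le])

theorem lorentzNorm_top_ne_top_of_distFn_le {u : X → ℝ≥0∞} {B θ : ℝ} {K : ℝ≥0∞} (hK : K ≠ ∞)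
    (hp : p ≠ 0) (hp' : p ≠ ∞) (hB : ∀ t ≥ B, distFn μ u t = 0) (hθ : 0 < θ)
    (hu : ∀ t > 0, distFn μ u t ^ (1 / p.toReal) ≤ K * ENNReal.ofReal (t ^ (θ - 1))) :
    lorentzNorm μ p ∞ u ≠ ∞ := by
  suffices hbound : lorentzNorm μ p ∞ u ≤ K * ENNReal.ofReal (B ^ θ) from
    ne_top_of_le_ne_top (ENNReal.mul_ne_top hK ENNReal.ofReal_ne_top) hbound
  rw [lorentzNorm_top]
  refine iSup₂_le fun t (ht : 0 < t) => ?_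
  rcases le_or_gt B t with hBt | hBt
  · simp [hB t hBt, ENNReal.zero_rpow_of_pos, ENNReal.toReal_pos hp hp']
  calc ENNReal.ofReal t * distFn μ u t ^ (1 / p.toReal)
      ≤ ENNReal.ofReal t * (K * ENNReal.ofReal (t ^ (θ - 1))) := by
        gcongr
        exact hu t ht
    _ = K * ENNReal.ofReal (t ^ θ) := by
        rw [mul_left_comm, ← ENNReal.ofReal_mul ht.le, Real.rpow_sub_one ht.ne',
          mul_div_cancel₀ _ ht.ne']
    _ ≤ K * ENNReal.ofReal (B ^ θ) := by gcongr

theorem ofReal_rpow_mul_rpow_div_le {D K : ℝ≥0∞} {r s t θ : ℝ} (hr : 0 ≤ r) (ht : 0 < t)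
    (hD : D ^ (1 / s) ≤ K * ENNReal.ofReal (t ^ (θ - 1))) :
    ENNReal.ofReal (t ^ (r - 1)) * D ^ (r / s) ≤
      K ^ r * ENNReal.ofReal (t ^ (r * θ - 1)) := by
  calc ENNReal.ofReal (t ^ (r - 1)) * D ^ (r / s)
      = ENNReal.ofReal (t ^ (r - 1)) * (D ^ (1 / s)) ^ r := by
        rw [← ENNReal.rpow_mul, one_div_mul_eq_div]
    _ ≤ ENNReal.ofReal (t ^ (r - 1)) * (K * ENNReal.ofReal (t ^ (θ - 1))) ^ r := by gcongr
    _ = K ^ r * ENNReal.ofReal (t ^ (r * θ - 1)) := by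
        rw [ENNReal.mul_rpow_of_nonneg _ _ hr, mul_left_comm,
          ENNReal.ofReal_rpow_of_nonneg (by positivity) hr, ← ENNReal.ofReal_mul (by positivity),
          ← Real.rpow_mul ht.le, ← Real.rpow_add ht]
        ring_nf

theorem lorentzNorm_ne_top_of_distFn_le {u : X → ℝ≥0∞} {B θ : ℝ} {K : ℝ≥0∞} (hK : K ≠ ∞)
    (hp : p ≠ 0) (hp' : p ≠ ∞) (hq : q ≠ 0) (hB₀ : 0 < B) (hB : ∀ t ≥ B, distFn μ u t = 0)
    (hθ : 0 < θ)
    (hu : ∀ t > 0, distFn μ u t ^ (1 / p.toReal) ≤ K * ENNReal.ofReal (t ^ (θ - 1))) :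
    lorentzNorm μ p q u ≠ ∞ := by
  rcases eq_or_ne q ∞ with rfl | hq'
  · exact lorentzNorm_top_ne_top_of_distFn_le hK hp hp' hB hθ hu
  have hp₀ : 0 < p.toReal := ENNReal.toReal_pos hp hp'
  have hq₀ : 0 < q.toReal := ENNReal.toReal_pos hq hq'
  have hpointwise : ∀ t ∈ Set.Ioi (0 : ℝ),
      ENNReal.ofReal (t ^ (q.toReal - 1)) * distFn μ u t ^ (q.toReal / p.toReal) ≤
        (Set.Ioo 0 B).indicator
          (fun t => K ^ q.toReal * ENNReal.ofReal (t ^ (q.toReal * θ - 1))) t := fun t ht => by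
    rcases le_or_gt B t with hBt | hBt
    · simp [hB t hBt, ENNReal.zero_rpow_of_pos (div_pos hq₀ hp₀)]
    rw [Set.indicator_of_mem (Set.mem_Ioo.2 ⟨ht, hBt⟩)]
    exact ofReal_rpow_mul_rpow_div_le hq₀.le ht (hu t ht)
  have hintegrable : IntegrableOn (fun t : ℝ => t ^ (q.toReal * θ - 1)) (Set.Ioo 0 B) :=
    (intervalIntegral.integrableOn_Ioo_rpow_iff hB₀).2 (by linarith [mul_pos hq₀ hθ])
  rw [lorentzNorm, if_neg hq']
  refine ENNReal.rpow_ne_top_of_nonneg (by positivity) (ENNReal.mul_ne_top hq'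
    (ne_top_of_le_ne_top ?_ (setLIntegral_mono' measurableSet_Ioi hpointwise)))
  rw [setLIntegral_indicator measurableSet_Ioo, Set.inter_eq_left.2 fun t ht => ht.1,
    lintegral_const_mul' _ _ (by finiteness)]
  exact ENNReal.mul_ne_top (by finiteness) hintegrable.lintegral_lt_top.ne

theorem lorentzNorm_ne_top_of_lintegral_rpow_ne_top (hp : p ≠ 0) (hp' : p ≠ ∞) (hq : q ≠ 0)
    {u : X → ℝ≥0∞} (hu : Measurable u) {B : ℝ≥0∞} (hB : B ≠ ∞) (huB : ∀ x, u x ≤ B) {a : ℝ}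
    (ha : 0 < a) (hap : a < p.toReal) (hua : ∫⁻ x, u x ^ a ∂μ ≠ ∞) :
    lorentzNorm μ p q u ≠ ∞ := by
  have hp₀ : 0 < p.toReal := ha.trans hap
  have hzero : ∀ t ≥ B.toReal + 1, distFn μ u t = 0 := fun t ht => by
    have hBt : B ≤ ENNReal.ofReal t := (ENNReal.le_ofReal_iff_toReal_le hB
      (by linarith [B.toReal_nonneg])).2 (by linarith)
    simp [distFn, fun x => ((huB x).trans hBt).not_gt]
  refine lorentzNorm_ne_top_of_distFn_le (K := (∫⁻ x, u x ^ a ∂μ) ^ (1 / p.toReal))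
    (θ := 1 - a / p.toReal) (by finiteness) hp hp' hq (by positivity) hzero
    (sub_pos.2 ((div_lt_one hp₀).2 hap)) fun t ht => ?_
  calc distFn μ u t ^ (1 / p.toReal)
      ≤ ((∫⁻ x, u x ^ a ∂μ) * ENNReal.ofReal (t ^ (-a))) ^ (1 / p.toReal) := by
        gcongr
        exact distFn_le_lintegral_rpow_mul hu ha ht
    _ = _ := by
        rw [ENNReal.mul_rpow_of_nonneg _ _ (by positivity),
          ENNReal.ofReal_rpow_of_nonneg (by positivity) (by positivity), ← Real.rpow_mul ht.le]
        ring_nf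

end LorentzNorm

section SchwartzEnvelope

variable {E F : Type*} [NormedAddCommGroup E] [NormedSpace ℝ E] [NormedAddCommGroup F]
  [NormedSpace ℝ F]

theorem exists_norm_le_mul_one_add_norm_rpow (f : 𝓢(E, F)) (N : ℝ) :
    ∃ B, 0 ≤ B ∧ ∀ x, ‖f x‖ ≤ B * (1 + ‖x‖) ^ (-N) := by
  refine ⟨2 ^ ⌈N⌉₊ * (Finset.Iic (⌈N⌉₊, 0)).sup (fun m => SchwartzMap.seminorm ℝ m.1 m.2) f,
    by positivity, fun x => ?_⟩
  have hx : 1 ≤ 1 + ‖x‖ := le_add_of_nonneg_right (norm_nonneg x)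
  have hseminorm := SchwartzMap.one_add_le_sup_seminorm_apply (𝕜 := ℝ) (m := (⌈N⌉₊, 0))
    le_rfl le_rfl f x
  rw [norm_iteratedFDeriv_zero] at hseminorm
  rw [Real.rpow_neg (by positivity), ← div_eq_mul_inv, le_div_iff₀' (by positivity)]
  refine le_trans ?_ hseminorm
  gcongr
  rw [← Real.rpow_natCast]
  exact Real.rpow_le_rpow_of_exponent_le hx (Nat.le_ceil N)

theorem exists_norm_sub_le_mul_one_add_norm_rpow (f : 𝓢(E, F)) {N : ℝ} (hN : 0 ≤ N) :
    ∃ B, 0 ≤ B ∧ ∀ x y, ‖y - x‖ ≤ 1 → ‖f y - f x‖ ≤ B * (1 + ‖x‖) ^ (-N) * ‖y - x‖ := by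
  obtain ⟨B, hB, hf⟩ := exists_norm_le_mul_one_add_norm_rpow
    (SchwartzMap.fderivCLM ℝ E F f) N
  refine ⟨B * 2 ^ N, by positivity, fun x y hxy => ?_⟩
  have hderiv : ∀ z ∈ Metric.closedBall x 1, ‖fderiv ℝ f z‖ ≤ B * 2 ^ N * (1 + ‖x‖) ^ (-N) :=
    fun z hz => by
    have hzx : ‖x‖ ≤ 1 + ‖z‖ := by
      linarith [norm_le_norm_add_norm_sub z x, mem_closedBall_iff_norm.1 hz]
    calc ‖fderiv ℝ f z‖ ≤ B * (1 + ‖z‖) ^ (-N) := hf z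
      _ ≤ B * (2⁻¹ * (1 + ‖x‖)) ^ (-N) := by
          refine mul_le_mul_of_nonneg_left (Real.rpow_le_rpow_of_nonpos (by positivity) ?_
            (neg_nonpos.2 hN)) hB
          linarith [norm_nonneg z]
      _ = B * 2 ^ N * (1 + ‖x‖) ^ (-N) := by
          rw [Real.mul_rpow (by positivity) (by positivity), Real.inv_rpow (by positivity),
            Real.rpow_neg (by positivity) N, inv_inv, mul_assoc]
  exact (convex_closedBall x 1).norm_image_sub_le_of_norm_fderiv_le
    (fun z _ => f.differentiableAt) hderiv (Metric.mem_closedBall_self zero_le_one)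
    (mem_closedBall_iff_norm.2 hxy)

theorem lorentzNorm_one_add_norm_rpow_ne_top [FiniteDimensional ℝ E] [MeasurableSpace E]
    [BorelSpace E] {μ : Measure E} [μ.IsAddHaarMeasure] {p q : ℝ≥0∞} (hp' : p ≠ ∞) (hq : q ≠ 0)
    {B : ℝ} (hB : 0 ≤ B) {N : ℝ} (hN : 0 < N) (hNp : Module.finrank ℝ E < N * p.toReal) :
    lorentzNorm μ p q (fun x => ENNReal.ofReal (B * (1 + ‖x‖) ^ (-N))) ≠ ∞ := by
  obtain ⟨a, ha, hap⟩ := exists_between ((div_lt_iff₀' hN).2 hNp)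
  have ha₀ : 0 < a := lt_of_le_of_lt (by positivity) ha
  have hp : p ≠ 0 := fun h => by simp [h] at hap; linarith
  refine lorentzNorm_ne_top_of_lintegral_rpow_ne_top hp hp' hq (B := ENNReal.ofReal B)
    (by fun_prop) ENNReal.ofReal_ne_top (fun x => ENNReal.ofReal_le_ofReal ?_) ha₀ hap ?_
  · exact mul_le_of_le_one_right hB (Real.rpow_le_one_of_one_le_of_nonpos
      (le_add_of_nonneg_right (norm_nonneg x)) (neg_nonpos.2 hN.le))
  have hpow : ∀ x : E, ENNReal.ofReal (B * (1 + ‖x‖) ^ (-N)) ^ a =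
      ENNReal.ofReal (B ^ a) * ENNReal.ofReal ((1 + ‖x‖) ^ (-(N * a))) := fun x => by
    rw [ENNReal.ofReal_rpow_of_nonneg (by positivity) ha₀.le,
      Real.mul_rpow hB (by positivity), ← Real.rpow_mul (by positivity), neg_mul,
      ENNReal.ofReal_mul (by positivity)]
  simp only [hpow]
  rw [lintegral_const_mul' _ _ ENNReal.ofReal_ne_top]
  exact ENNReal.mul_ne_top ENNReal.ofReal_ne_top
    (finite_integral_one_add_norm ((div_lt_iff₀' hN).1 ha)).ne

end SchwartzEnvelope

/-- The step function `x ↦ F (⌊t x⌋ / t)`, constant on the cells `[k / t, (k + 1) / t)`, which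
carries the samples of `F` on `t⁻¹ ℤ`. -/
noncomputable def stepSample {E : Type*} (t : ℝ) (F : ℝ → E) (x : ℝ) : E :=
  F (⌊t * x⌋ / t)

theorem abs_floor_mul_div_sub_le {t : ℝ} (ht : 0 < t) (x : ℝ) : |⌊t * x⌋ / t - x| ≤ t⁻¹ := by
  have hscale : ⌊t * x⌋ / t - x = -(Int.fract (t * x) * t⁻¹) := by
    rw [← Int.self_sub_floor]
    field_simp
    ring
  rw [hscale, abs_neg, abs_of_nonneg (by positivity)]
  exact mul_le_of_le_one_left (by positivity) (Int.fract_lt_one _).le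

theorem tendsto_stepSample {E : Type*} [TopologicalSpace E] {F : ℝ → E} (hF : Continuous F)
    (x : ℝ) : Tendsto (fun t => stepSample t F x) atTop (𝓝 (F x)) := by
  have hdiff : Tendsto (fun t : ℝ => ⌊t * x⌋ / t - x) atTop (𝓝 0) :=
    squeeze_zero_norm' ((eventually_gt_atTop 0).mono fun t ht => abs_floor_mul_div_sub_le ht x)
      tendsto_inv_atTop_zero
  exact (hF.tendsto x).comp (by simpa using hdiff.add_const x)

theorem measurePreserving_floor_mul {t : ℝ} (ht : 0 < t) :
    MeasurePreserving (fun x : ℝ => ⌊t * x⌋) volume (ENNReal.ofReal t⁻¹ • Measure.count) := by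
  have hmeas : Measurable fun x : ℝ => ⌊t * x⌋ := by fun_prop
  refine ⟨hmeas, Measure.ext_of_singleton fun k => ?_⟩
  have hcell : (fun x : ℝ => ⌊t * x⌋) ⁻¹' {k} = Set.Ico (k / t) ((k + 1) / t) := by
    ext x
    simp only [Set.mem_preimage, Set.mem_singleton_iff, Int.floor_eq_iff, Set.mem_Ico,
      div_le_iff₀' ht, lt_div_iff₀' ht]
  rw [Measure.map_apply hmeas (measurableSet_singleton k), hcell, Real.volume_Ico, ← sub_div,
    add_sub_cancel_left, one_div]
  simp

section StepSample

variable {p q : ℝ≥0∞}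

theorem lorentzNormC_stepSample (hq : q ≠ 0) {t : ℝ} (ht : 0 < t) (F : ℝ → ℂ) :
    lorentzNormC volume p q (stepSample t F) =
      ENNReal.ofReal t⁻¹ ^ (1 / p.toReal) *
        lorentzNormC Measure.count p q fun k : ℤ => F (k / t) :=
  (lorentzNorm_comp_measurePreserving (measurePreserving_floor_mul ht)
    (u := fun k : ℤ => ‖F (k / t)‖ₑ) .of_discrete).trans (lorentzNorm_smul_measure hq _ _)

theorem lorentzNormC_ofReal_mul {X : Type*} [MeasurableSpace X] {μ : Measure X} (hq : q ≠ 0)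
    {c : ℝ} (hc : 0 < c) (F : X → ℂ) :
    lorentzNormC μ p q (fun x => c * F x) = ENNReal.ofReal c * lorentzNormC μ p q F := by
  rw [lorentzNormC, lorentzNormC, ← lorentzNorm_const_mul hq hc]
  congr with x
  rw [← enorm_eq_nnnorm, ← enorm_eq_nnnorm, enorm_mul, ← ofReal_norm (c : ℂ),
    norm_real, Real.norm_of_nonneg hc.le]

theorem lorentzNormC_le_liminf_of_tendsto {X : Type*} [MeasurableSpace X] {μ : Measure X}
    (hq : q ≠ 0) {F : ℕ → X → ℂ} {G : X → ℂ} (h : ∀ x, Tendsto (fun j => F j x) atTop (𝓝 (G x))) :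
    lorentzNormC μ p q G ≤ liminf (fun j => lorentzNormC μ p q (F j)) atTop := by
  have hlim : (fun x => ‖G x‖ₑ) = fun x => liminf (fun j => ‖F j x‖ₑ) atTop :=
    funext fun x => (h x).enorm.liminf_eq.symm
  exact (congrArg (lorentzNorm μ p q) hlim).trans_le (lorentzNorm_liminf_le hq fun j x => ‖F j x‖ₑ)

theorem lorentzNormC_schwartz_ne_top (hp : p ≠ 0) (hp' : p ≠ ∞) (hq : q ≠ 0) (f : 𝓢(ℝ, ℂ)) :
    lorentzNormC volume p q f ≠ ∞ := by
  have hp₀ : 0 < p.toReal := ENNReal.toReal_pos hp hp'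
  obtain ⟨B, hB, hf⟩ := exists_norm_le_mul_one_add_norm_rpow f (2 / p.toReal)
  refine ne_top_of_le_ne_top (lorentzNorm_one_add_norm_rpow_ne_top hp' hq hB (N := 2 / p.toReal)
    (by positivity)
    (by simp [div_mul_cancel₀ _ hp₀.ne'])) (lorentzNorm_mono fun x => ?_)
  exact (ofReal_norm (f x)).symm.trans_le (ENNReal.ofReal_le_ofReal (hf x))

theorem tendsto_lorentzNormC_stepSample (hp : p ≠ 0) (hp' : p ≠ ∞) (hq : q ≠ 0) (f : 𝓢(ℝ, ℂ)) :
    Tendsto (fun t => lorentzNormC volume p q (stepSample t f)) atTop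
      (𝓝 (lorentzNormC volume p q f)) := by
  have hp₀ : 0 < p.toReal := ENNReal.toReal_pos hp hp'
  obtain ⟨B, hB, hf⟩ := exists_norm_sub_le_mul_one_add_norm_rpow f (N := 2 / p.toReal)
    (by positivity)
  set W : ℝ → ℝ≥0∞ := fun x => ENNReal.ofReal (B * (1 + ‖x‖) ^ (-(2 / p.toReal)))
  have hW : lorentzNorm volume p q W ≠ ∞ :=
    lorentzNorm_one_add_norm_rpow_ne_top hp' hq hB (by positivity)
      (by simp [div_mul_cancel₀ _ hp₀.ne'])
  have hupper : ∀ t ≥ 1, lorentzNormC volume p q (stepSample t f) ≤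
      lorentzNorm volume p q fun x => ‖f x‖ₑ + ENNReal.ofReal t⁻¹ * W x := fun t ht => by
    have ht₀ : 0 < t := zero_lt_one.trans_le ht
    refine lorentzNorm_mono fun x => ?_
    have hx := abs_floor_mul_div_sub_le ht₀ x
    have hdiff : ‖stepSample t f x - f x‖ ≤ t⁻¹ * (B * (1 + ‖x‖) ^ (-(2 / p.toReal))) :=
      (hf x _ (hx.trans (inv_le_one_of_one_le₀ ht))).trans
        (by rw [mul_comm]; exact mul_le_mul_of_nonneg_right hx (by positivity))
    calc ‖stepSample t f x‖ₑ ≤ ‖f x‖ₑ + ‖stepSample t f x - f x‖ₑ := by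
          simpa using enorm_add_le (f x) (stepSample t f x - f x)
      _ ≤ ‖f x‖ₑ + ENNReal.ofReal t⁻¹ * W x := by
          rw [← ENNReal.ofReal_mul (by positivity), ← ofReal_norm (stepSample t f x - f x)]
          gcongr
  have hlim : Tendsto
      (fun t : ℝ => lorentzNorm volume p q fun x => ‖f x‖ₑ + ENNReal.ofReal t⁻¹ * W x) atTop
      (𝓝 (lorentzNormC volume p q f)) :=
    (tendsto_lorentzNorm_add_const_mul hp hp' hq _ hW).comp tendsto_inv_atTop_nhdsGT_zero
  refine tendsto_of_seq_tendsto fun u hu => tendsto_of_le_liminf_of_limsup_le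
    (lorentzNormC_le_liminf_of_tendsto hq fun x => (tendsto_stepSample f.continuous x).comp hu) ?_
  rw [← (hlim.comp hu).limsup_eq]
  exact limsup_le_limsup ((hu.eventually_ge_atTop 1).mono fun j hj => hupper _ hj)

end StepSample

section Sampling

theorem fourier_comp_div {E : Type*} [NormedAddCommGroup E] [NormedSpace ℂ E] {t : ℝ} (ht : t ≠ 0)
    (f : ℝ → E) (ξ : ℝ) : 𝓕 (fun x => f (x / t)) ξ = |t| • 𝓕 f (t * ξ) := by
  rw [Real.fourier_real_eq_integral_exp_smul, Real.fourier_real_eq_integral_exp_smul,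
    ← Measure.integral_comp_div]
  refine integral_congr_ae (.of_forall fun x => ?_)
  have hphase : x * ξ = x / t * (t * ξ) := by field_simp
  simp only [mul_assoc, hphase]

/-- The Schwartz function `x ↦ f (x / t)`, whose values at the integers are the samples of `f` on
`t⁻¹ ℤ`. -/
noncomputable def dilate {t : ℝ} (ht : t ≠ 0) (f : 𝓢(ℝ, ℂ)) : 𝓢(ℝ, ℂ) :=
  SchwartzMap.compCLMOfContinuousLinearEquiv ℂ
    (ContinuousLinearEquiv.unitsEquivAut ℝ (Units.mk0 t⁻¹ (inv_ne_zero ht))) f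

theorem coe_dilate {t : ℝ} (ht : t ≠ 0) (f : 𝓢(ℝ, ℂ)) : ⇑(dilate ht f) = fun x => f (x / t) := rfl

theorem summable_norm_sample (f : 𝓢(ℝ, ℂ)) {t : ℝ} (ht : t ≠ 0) :
    Summable fun k : ℤ => ‖f (k / t)‖ :=
  (summable_of_isBigO (Real.summable_abs_int_rpow one_lt_two)
    (((dilate ht f).isBigO_cocompact_rpow (-2)).comp_tendsto Int.tendsto_coe_cofinite)).norm

theorem tsum_sample_mul_exp (f : 𝓢(ℝ, ℂ)) {t : ℝ} (ht : t ≠ 0) (ξ : ℝ) :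
    ∑' k : ℤ, f (k / t) * cexp (-(2 * π) * I * k * ξ) =
      ∑' n : ℤ, |t| * 𝓕 (f : ℝ → ℂ) (t * (ξ + n)) := by
  have hpoisson := SchwartzMap.tsum_eq_tsum_fourier (𝓕 (dilate ht f)) ξ
  rw [← (Equiv.neg ℤ).tsum_eq fun k => 𝓕 (𝓕 (dilate ht f)) k * _] at hpoisson
  have hneg : ∀ x, 𝓕 (𝓕 (dilate ht f)) (-x) = f (x / t) := fun x => by
    rw [SchwartzMap.fourier_coe, ← Real.fourierInv_eq_fourier_neg, ← SchwartzMap.fourierInv_coe,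
      FourierTransform.fourierInv_fourier_eq, coe_dilate]
  simp only [Equiv.neg_apply, Int.cast_neg, hneg, SchwartzMap.fourier_coe (dilate ht f),
    coe_dilate, fourier_comp_div ht, fourier_coe_apply] at hpoisson
  refine .trans (tsum_congr fun k => ?_) hpoisson.symm
  congr 2
  push_cast
  ring

theorem hasSum_sample_mul_exp (f : 𝓢(ℝ, ℂ)) {t : ℝ} (ht : 0 < t)
    (hf : ∀ ξ, t / 2 ≤ |ξ| → 𝓕 (f : ℝ → ℂ) ξ = 0) {ξ : ℝ} (hξ : |ξ| ≤ 1 / 2) :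
    HasSum (fun k : ℤ => f (k / t) * cexp (-(2 * π) * I * k * ξ)) (t * 𝓕 (f : ℝ → ℂ) (t * ξ)) := by
  have hsum : Summable fun k : ℤ => f (k / t) * cexp (-(2 * π) * I * k * ξ) :=
    .of_norm ((summable_norm_sample f ht.ne').congr fun k => by
      simp [Complex.norm_exp])
  have halias : ∀ n : ℤ, n ≠ 0 → |t| * 𝓕 (f : ℝ → ℂ) (t * (ξ + n)) = 0 := fun n hn => by
    have hn₁ : (1 : ℝ) ≤ |(n : ℝ)| := by exact_mod_cast Int.one_le_abs hn
    have htri : |(n : ℝ)| ≤ |ξ + n| + |ξ| := by simpa using abs_sub (ξ + n) ξ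
    rw [hf, mul_zero]
    rw [abs_mul, abs_of_pos ht]
    nlinarith
  have htsum := tsum_sample_mul_exp f ht.ne' ξ
  rw [tsum_eq_single 0 halias, Int.cast_zero, add_zero, abs_of_pos ht] at htsum
  exact htsum ▸ hsum.hasSum

theorem eventually_forall_half_le_abs_imp_eq_zero {E : Type*} [Zero E] {F : ℝ → E}
    (hF : HasCompactSupport F) : ∀ᶠ t in atTop, ∀ ξ, t / 2 ≤ |ξ| → F ξ = 0 := by
  obtain ⟨R, hR⟩ := hF.isCompact.isBounded.exists_norm_le
  filter_upwards [eventually_gt_atTop (2 * R)] with t ht ξ hξ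
  refine image_eq_zero_of_notMem_tsupport fun hmem => ?_
  linarith [hR ξ hmem, Real.norm_eq_abs ξ]

end Sampling

section Truncation

variable {a : ℤ → ℂ}

theorem trigP_indicator (s : Finset ℤ) (a : ℤ → ℂ) (ξ : ℝ) :
    trigP ((s : Set ℤ).indicator a) ξ = ∑ k ∈ s, a k * cexp (-(2 * π) * I * k * ξ) := by
  rw [trigP, finsum_eq_sum_of_support_subset (s := s) _
    ((Function.support_mul_subset_left _ _).trans Set.support_indicator_subset)]
  exact Finset.sum_congr rfl fun k hk => by rw [Set.indicator_of_mem (Finset.mem_coe.2 hk)]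

theorem continuous_trigP_indicator (s : Finset ℤ) (a : ℤ → ℂ) :
    Continuous (trigP ((s : Set ℤ).indicator a)) := by
  simp only [funext (trigP_indicator s a)]
  fun_prop

theorem norm_trigP_indicator_le (ha : Summable fun k => ‖a k‖) (s : Finset ℤ) (ξ : ℝ) :
    ‖trigP ((s : Set ℤ).indicator a) ξ‖ ≤ ∑' k, ‖a k‖ := by
  rw [trigP_indicator]
  refine (norm_sum_le _ _).trans (le_trans (Finset.sum_le_sum fun k _ => ?_)
    (ha.sum_le_tsum s fun k _ => norm_nonneg _))
  simp [Complex.norm_exp]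

theorem tendsto_trigP_indicator {ξ : ℝ} {z : ℂ}
    (h : HasSum (fun k : ℤ => a k * cexp (-(2 * π) * I * k * ξ)) z) :
    Tendsto (fun s : Finset ℤ => trigP ((s : Set ℤ).indicator a) ξ) atTop (𝓝 z) := by
  simp only [trigP_indicator]
  exact h

end Truncation

theorem tendsto_integral_integral_mul {ι X Y : Type*} [MeasurableSpace X] [MeasurableSpace Y]
    {μ : Measure X} {ν : Measure Y} [SFinite μ] [SFinite ν] {l : Filter ι} [l.NeBot]
    [l.IsCountablyGenerated] {F : ι → X × Y → ℂ} {G w : X × Y → ℂ} {B : ℝ}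
    (hw : Integrable w (μ.prod ν)) (hF : ∀ i, AEStronglyMeasurable (F i) (μ.prod ν))
    (hFB : ∀ i z, ‖F i z‖ ≤ B) (hFG : ∀ᵐ z ∂μ.prod ν, Tendsto (fun i => F i z) l (𝓝 (G z))) :
    Tendsto (fun i => ∫ x, ∫ y, F i (x, y) * w (x, y) ∂ν ∂μ) l
      (𝓝 (∫ x, ∫ y, G (x, y) * w (x, y) ∂ν ∂μ)) := by
  have hFw : ∀ i, Integrable (fun z => F i z * w z) (μ.prod ν) := fun i =>
    hw.bdd_mul (hF i) (.of_forall (hFB i))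
  have hGw : Integrable (fun z => G z * w z) (μ.prod ν) :=
    hw.bdd_mul (aestronglyMeasurable_of_tendsto_ae l hF hFG) (hFG.mono fun z hz =>
      le_of_tendsto hz.norm (.of_forall fun i => hFB i z))
  rw [← integral_prod _ hGw]
  simp only [← integral_prod _ (hFw _)]
  refine tendsto_integral_filter_of_dominated_convergence (fun z => B * ‖w z‖)
    (.of_forall fun i => (hFw i).aestronglyMeasurable)
    (.of_forall fun i => .of_forall fun z => ?_) (hw.norm.const_mul B)
    (hFG.mono fun z hz => hz.mul_const _)
  rw [norm_mul]
  exact mul_le_mul_of_nonneg_right (hFB i z) (norm_nonneg _)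

section Multiplier

variable {m : ℝ × ℝ → ℂ} {f g : 𝓢(ℝ, ℂ)} {t : ℝ}

theorem LocallyBounded.comp_continuous (hloc : LocallyBounded m) {φ : ℝ × ℝ → ℝ × ℝ}
    (hφ : Continuous φ) : LocallyBounded (m ∘ φ) := fun _ hK =>
  (hloc _ (hK.image hφ)).imp fun _ hC _ hz => hC _ (Set.mem_image_of_mem φ hz)

theorem LocallyBounded.locallyIntegrable (hloc : LocallyBounded m) (hm : Measurable m) :
    LocallyIntegrable m :=
  locallyIntegrable_iff.2 fun K hK =>
    let ⟨_, hC⟩ := hloc K hK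
    Measure.integrableOn_of_bounded hK.measure_lt_top.ne hm.aestronglyMeasurable
      (ae_restrict_of_forall_mem hK.measurableSet hC)

theorem continuous_Cm (hm : Measurable m) (hloc : LocallyBounded m)
    (hf : HasCompactSupport (𝓕 (f : ℝ → ℂ))) (hg : HasCompactSupport (𝓕 (g : ℝ → ℂ))) :
    Continuous (Cm m f g) := by
  have hsupp : HasCompactSupport fun z : ℝ × ℝ => 𝓕 (f : ℝ → ℂ) z.1 * 𝓕 (g : ℝ → ℂ) z.2 :=
    .intro (hf.isCompact.prod hg.isCompact) fun z hz => by
      rcases not_and_or.1 hz with hz | hz <;> simp [image_eq_zero_of_notMem_tsupport hz]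
  have hint : Integrable fun z : ℝ × ℝ => 𝓕 (f : ℝ → ℂ) z.1 * 𝓕 (g : ℝ → ℂ) z.2 * m z :=
    (hloc.locallyIntegrable hm).integrable_smul_left_of_hasCompactSupport
      (((𝓕 f).continuous.comp continuous_fst).mul ((𝓕 g).continuous.comp continuous_snd)) hsupp
  have hCm : Cm m f g = fun x : ℝ => ∫ ξ : ℝ, ∫ η : ℝ, cexp (2 * π * I * x * (ξ + η)) *
      (𝓕 (f : ℝ → ℂ) ξ * 𝓕 (g : ℝ → ℂ) η * m (ξ, η)) := by
    ext x
    simp only [Cm, mul_comm (cexp _)]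
  rw [hCm, continuous_iff_continuousAt]
  exact fun x => tendsto_integral_integral_mul
    (F := fun (x : ℝ) (z : ℝ × ℝ) => cexp (2 * π * I * x * (z.1 + z.2))) (B := 1) hint
    (fun x => Continuous.aestronglyMeasurable (by fun_prop))
    (fun x z => by simp [Complex.norm_exp])
    (.of_forall fun z => Continuous.tendsto (by fun_prop) x)

theorem setIntegral_Icc_comp_mul_left {E : Type*} [NormedAddCommGroup E] [NormedSpace ℝ E]
    (ht : 0 < t) {G : ℝ → E} (hG : ∀ ξ, t / 2 ≤ |ξ| → G ξ = 0) :
    ∫ ξ in Set.Icc (-(1 / 2) : ℝ) (1 / 2), G (t * ξ) = t⁻¹ • ∫ ξ, G ξ := by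
  rw [setIntegral_eq_integral_of_forall_compl_eq_zero fun ξ hξ => hG _ ?_,
    Measure.integral_comp_mul_left, abs_of_pos (inv_pos.2 ht)]
  have hξ' : 1 / 2 < |ξ| := lt_of_not_ge fun h => hξ (abs_le.1 h)
  rw [abs_mul, abs_of_pos ht]
  nlinarith

theorem setIntegral_Icc_fourier_mul_eq_Cm (ht : 0 < t)
    (hf : ∀ ξ, t / 2 ≤ |ξ| → 𝓕 (f : ℝ → ℂ) ξ = 0) (hg : ∀ ξ, t / 2 ≤ |ξ| → 𝓕 (g : ℝ → ℂ) ξ = 0)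
    (m : ℝ × ℝ → ℂ) (n : ℤ) :
    ∫ ξ in Set.Icc (-(1 / 2) : ℝ) (1 / 2), ∫ η in Set.Icc (-(1 / 2) : ℝ) (1 / 2),
      (t * 𝓕 (f : ℝ → ℂ) (t * ξ)) * (t * 𝓕 (g : ℝ → ℂ) (t * η)) * m (t * ξ, t * η) *
        cexp (2 * π * I * n * (ξ + η)) = Cm m f g (n / t) := by
  set Ψ : ℝ → ℝ → ℂ := fun ξ η => 𝓕 (f : ℝ → ℂ) ξ * 𝓕 (g : ℝ → ℂ) η * m (ξ, η) *
    cexp (2 * π * I * ((n / t : ℝ) : ℂ) * (ξ + η)) with hΨ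
  have htc : (t : ℂ) ≠ 0 := by exact_mod_cast ht.ne'
  have hscale : ∀ ξ η : ℝ, (t * 𝓕 (f : ℝ → ℂ) (t * ξ)) * (t * 𝓕 (g : ℝ → ℂ) (t * η)) *
      m (t * ξ, t * η) * cexp (2 * π * I * n * (ξ + η)) =
        (t * t : ℂ) * Ψ (t * ξ) (t * η) := fun ξ η => by
    have hphase : 2 * π * I * n * (ξ + η) =
        2 * π * I * ((n / t : ℝ) : ℂ) * (((t * ξ : ℝ) : ℂ) + ((t * η : ℝ) : ℂ)) := by
      push_cast
      field_simp
    rw [hphase]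
    ring
  have hinner : ∀ ξ, ∫ η in Set.Icc (-(1 / 2) : ℝ) (1 / 2), Ψ ξ (t * η) = t⁻¹ • ∫ η, Ψ ξ η :=
    fun ξ => setIntegral_Icc_comp_mul_left ht fun η hη => by simp [hΨ, hg η hη]
  simp only [hscale, integral_const_mul, hinner]
  rw [setIntegral_Icc_comp_mul_left (G := fun ξ => t⁻¹ • ∫ η, Ψ ξ η) ht fun ξ hξ => by
    simp [hΨ, hf ξ hξ], integral_smul]
  simp only [real_smul, ofReal_inv]
  field_simp
  rfl

theorem tendsto_Dop_indicator (hm : Measurable m) (hloc : LocallyBounded m) {a b : ℤ → ℂ}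
    (ha : Summable fun k => ‖a k‖) (hb : Summable fun k => ‖b k‖) {P Q : ℝ → ℂ}
    (hP : ∀ ξ : ℝ, |ξ| ≤ 1 / 2 → HasSum (fun k : ℤ => a k * cexp (-(2 * π) * I * k * ξ)) (P ξ))
    (hQ : ∀ ξ : ℝ, |ξ| ≤ 1 / 2 → HasSum (fun k : ℤ => b k * cexp (-(2 * π) * I * k * ξ)) (Q ξ))
    (t p : ℝ) (n : ℤ) :
    Tendsto (fun s : Finset ℤ => Dop m t p ((s : Set ℤ).indicator a) ((s : Set ℤ).indicator b) n)
      atTop (𝓝 (((t ^ (1 / p) : ℝ) : ℂ) *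
        ∫ ξ in Set.Icc (-(1 / 2) : ℝ) (1 / 2), ∫ η in Set.Icc (-(1 / 2) : ℝ) (1 / 2),
          P ξ * Q η * m (t * ξ, t * η) * cexp (2 * π * I * n * (ξ + η)))) := by
  set J := Set.Icc (-(1 / 2) : ℝ) (1 / 2)
  have hw : IntegrableOn (fun z : ℝ × ℝ => m (t * z.1, t * z.2) *
      cexp (2 * π * I * n * (z.1 + z.2))) (J ×ˢ J) :=
    (((hloc.comp_continuous (φ := fun z => (t * z.1, t * z.2)) (by fun_prop)).locallyIntegrable
      (by fun_prop)).integrableOn_isCompact (isCompact_Icc.prod isCompact_Icc)).mul_continuousOn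
      (by fun_prop) (isCompact_Icc.prod isCompact_Icc)
  rw [IntegrableOn, Measure.volume_eq_prod, ← Measure.prod_restrict] at hw
  simp only [Dop, mul_assoc (_ * _) (m _)]
  refine .const_mul _ (tendsto_integral_integral_mul (F := fun (s : Finset ℤ) z =>
      trigP ((s : Set ℤ).indicator a) z.1 * trigP ((s : Set ℤ).indicator b) z.2)
    (G := fun z => P z.1 * Q z.2) (B := (∑' k, ‖a k‖) * ∑' k, ‖b k‖) hw
    (fun s => ?_) (fun s z => ?_) ?_)
  · exact ((continuous_trigP_indicator s a).comp continuous_fst |>.mul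
      ((continuous_trigP_indicator s b).comp continuous_snd)).aestronglyMeasurable
  · rw [norm_mul]
    exact mul_le_mul (norm_trigP_indicator_le ha s _) (norm_trigP_indicator_le hb s _)
      (norm_nonneg _) (tsum_nonneg fun _ => norm_nonneg _)
  · rw [Measure.prod_restrict]
    exact ae_restrict_of_forall_mem (measurableSet_Icc.prod measurableSet_Icc) fun z hz =>
      (tendsto_trigP_indicator (hP _ (abs_le.2 hz.1))).mul
        (tendsto_trigP_indicator (hQ _ (abs_le.2 hz.2)))

theorem tendsto_Dop_sample (hm : Measurable m) (hloc : LocallyBounded m) (ht : 0 < t)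
    (hf : ∀ ξ, t / 2 ≤ |ξ| → 𝓕 (f : ℝ → ℂ) ξ = 0) (hg : ∀ ξ, t / 2 ≤ |ξ| → 𝓕 (g : ℝ → ℂ) ξ = 0)
    (p : ℝ) (n : ℤ) :
    Tendsto (fun s : Finset ℤ => Dop m t p ((s : Set ℤ).indicator fun k => f (k / t))
      ((s : Set ℤ).indicator fun k => g (k / t)) n)
      atTop (𝓝 (((t ^ (1 / p) : ℝ) : ℂ) * Cm m f g (n / t))) := by
  rw [← setIntegral_Icc_fourier_mul_eq_Cm ht hf hg]
  exact tendsto_Dop_indicator hm hloc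
    (summable_norm_sample f ht.ne') (summable_norm_sample g ht.ne')
    (fun ξ => hasSum_sample_mul_exp f ht hf) (fun ξ => hasSum_sample_mul_exp g ht hg) t p n

variable {p₁ q₁ p₂ q₂ p₃ q₃ : ℝ≥0∞} {p : ℝ} {K : ℝ≥0∞}

theorem rpow_mul_lorentzNormC_sample_Cm_le (hq₃ : q₃ ≠ 0) (hm : Measurable m)
    (hloc : LocallyBounded m) (ht : 0 < t)
    (H : ∀ a b : ℤ → ℂ, (Function.support a).Finite → (Function.support b).Finite →
      lorentzNormC Measure.count p₃ q₃ (Dop m t p a b) ≤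
        K * (lorentzNormC Measure.count p₁ q₁ a * lorentzNormC Measure.count p₂ q₂ b))
    (hf : ∀ ξ, t / 2 ≤ |ξ| → 𝓕 (f : ℝ → ℂ) ξ = 0)
    (hg : ∀ ξ, t / 2 ≤ |ξ| → 𝓕 (g : ℝ → ℂ) ξ = 0) :
    ENNReal.ofReal t ^ (1 / p) *
        lorentzNormC Measure.count p₃ q₃ (fun n : ℤ => Cm m f g (n / t)) ≤
      K * (lorentzNormC Measure.count p₁ q₁ (fun k : ℤ => f (k / t)) *
        lorentzNormC Measure.count p₂ q₂ (fun k : ℤ => g (k / t))) := by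
  have hlim : ∀ n : ℤ, Tendsto (fun N : ℕ => Dop m t p
      ((Finset.Icc (-N : ℤ) N : Set ℤ).indicator fun k => f (k / t))
      ((Finset.Icc (-N : ℤ) N : Set ℤ).indicator fun k => g (k / t)) n)
      atTop (𝓝 (((t ^ (1 / p) : ℝ) : ℂ) * Cm m f g (n / t))) := fun n =>
    (tendsto_Dop_sample hm hloc ht hf hg p n).comp Finset.tendsto_Icc_neg
  have hindicator : ∀ (s : Set ℤ) (a : ℤ → ℂ) (r s' : ℝ≥0∞),
      lorentzNormC Measure.count r s' (s.indicator a) ≤ lorentzNormC Measure.count r s' a :=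
    fun s a r s' => lorentzNorm_mono fun k => enorm_indicator_le_enorm_self a k
  rw [ENNReal.ofReal_rpow_of_pos ht, ← lorentzNormC_ofReal_mul hq₃ (by positivity)]
  refine (lorentzNormC_le_liminf_of_tendsto hq₃ hlim).trans (liminf_le_of_le (by isBoundedDefault)
    fun c hc => ?_)
  obtain ⟨N, hN⟩ := hc.exists
  refine hN.trans ((H _ _ ?_ ?_).trans ?_)
  · exact (Finset.finite_toSet _).subset Set.support_indicator_subset
  · exact (Finset.finite_toSet _).subset Set.support_indicator_subset
  · gcongr <;> apply hindicator

end Multiplier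

section Transference

variable {p₁ q₁ p₂ q₂ p₃ q₃ : ℝ≥0∞} {p : ℝ}

theorem lorentzNormC_stepSample_le_of_sample_le (hq₁ : q₁ ≠ 0) (hq₂ : q₂ ≠ 0) (hq₃ : q₃ ≠ 0)
    (hp : 1 / p = 1 / p₁.toReal + 1 / p₂.toReal - 1 / p₃.toReal) {t : ℝ} (ht : 0 < t) {K : ℝ≥0∞}
    {F G S : ℝ → ℂ}
    (h : ENNReal.ofReal t ^ (1 / p) * lorentzNormC Measure.count p₃ q₃ (fun n : ℤ => S (n / t)) ≤
      K * (lorentzNormC Measure.count p₁ q₁ (fun k : ℤ => F (k / t)) *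
        lorentzNormC Measure.count p₂ q₂ (fun k : ℤ => G (k / t)))) :
    lorentzNormC volume p₃ q₃ (stepSample t S) ≤
      K * (lorentzNormC volume p₁ q₁ (stepSample t F) *
        lorentzNormC volume p₂ q₂ (stepSample t G)) := by
  have hweight : ENNReal.ofReal t⁻¹ ^ (1 / p₃.toReal) = ENNReal.ofReal t⁻¹ ^ (1 / p₁.toReal) *
      ENNReal.ofReal t⁻¹ ^ (1 / p₂.toReal) * ENNReal.ofReal t ^ (1 / p) := by
    have hinv : ENNReal.ofReal t ^ (1 / p) = ENNReal.ofReal t⁻¹ ^ (-(1 / p)) := by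
      rw [ENNReal.ofReal_inv_of_pos ht, ENNReal.inv_rpow, ENNReal.rpow_neg, inv_inv]
    have ht₀ : ENNReal.ofReal t⁻¹ ≠ 0 := by simpa using ht
    rw [hinv, ← ENNReal.rpow_add _ _ ht₀ ENNReal.ofReal_ne_top,
      ← ENNReal.rpow_add _ _ ht₀ ENNReal.ofReal_ne_top, hp]
    congr 1
    ring
  rw [lorentzNormC_stepSample hq₁ ht, lorentzNormC_stepSample hq₂ ht,
    lorentzNormC_stepSample hq₃ ht, hweight, mul_assoc]
  calc _ ≤ _ := mul_le_mul_right h _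
    _ = _ := by ring

theorem stmt1_general (hp₁ : p₁ ≠ 0) (hp₁' : p₁ ≠ ∞) (hq₁ : q₁ ≠ 0) (hp₂ : p₂ ≠ 0) (hp₂' : p₂ ≠ ∞)
    (hq₂ : q₂ ≠ 0) (_hp₃ : p₃ ≠ 0) (_hp₃' : p₃ ≠ ∞) (hq₃ : q₃ ≠ 0)
    (hp : 1 / p = 1 / p₁.toReal + 1 / p₂.toReal - 1 / p₃.toReal) (C : ℝ) {m : ℝ × ℝ → ℂ}
    (hm : Measurable m) (hloc : LocallyBounded m)
    (H : ∃ᶠ t : ℝ in atTop, ∀ a b : ℤ → ℂ,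
      (Function.support a).Finite → (Function.support b).Finite →
      lorentzNormC Measure.count p₃ q₃ (Dop m t p a b) ≤
        ENNReal.ofReal C *
          (lorentzNormC Measure.count p₁ q₁ a * lorentzNormC Measure.count p₂ q₂ b))
    (f g : 𝓢(ℝ, ℂ)) (hf : HasCompactSupport (𝓕 (f : ℝ → ℂ)))
    (hg : HasCompactSupport (𝓕 (g : ℝ → ℂ))) :
    lorentzNormC volume p₃ q₃ (Cm m f g) ≤
      ENNReal.ofReal C * (lorentzNormC volume p₁ q₁ f * lorentzNormC volume p₂ q₂ g) := by
  have hstep : ∃ᶠ t : ℝ in atTop, lorentzNormC volume p₃ q₃ (stepSample t (Cm m f g)) ≤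
      ENNReal.ofReal C * (lorentzNormC volume p₁ q₁ (stepSample t f) *
        lorentzNormC volume p₂ q₂ (stepSample t g)) :=
    (H.and_eventually ((eventually_gt_atTop 0).and
      ((eventually_forall_half_le_abs_imp_eq_zero hf).and
        (eventually_forall_half_le_abs_imp_eq_zero hg)))).mono fun t ⟨hD, ht, hft, hgt⟩ =>
      lorentzNormC_stepSample_le_of_sample_le hq₁ hq₂ hq₃ hp ht
        (rpow_mul_lorentzNormC_sample_Cm_le hq₃ hm hloc ht hD hft hgt)
  obtain ⟨u, hu, hstep_u⟩ := exists_seq_forall_of_frequently hstep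
  have hlim : Tendsto (fun j => ENNReal.ofReal C * (lorentzNormC volume p₁ q₁ (stepSample (u j) f) *
      lorentzNormC volume p₂ q₂ (stepSample (u j) g))) atTop
      (𝓝 (ENNReal.ofReal C * (lorentzNormC volume p₁ q₁ f * lorentzNormC volume p₂ q₂ g))) :=
    ENNReal.Tendsto.const_mul (ENNReal.Tendsto.mul
      ((tendsto_lorentzNormC_stepSample hp₁ hp₁' hq₁ f).comp hu)
      (.inr (lorentzNormC_schwartz_ne_top hp₂ hp₂' hq₂ g))
      ((tendsto_lorentzNormC_stepSample hp₂ hp₂' hq₂ g).comp hu)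
      (.inr (lorentzNormC_schwartz_ne_top hp₁ hp₁' hq₁ f))) (.inr ENNReal.ofReal_ne_top)
  calc lorentzNormC volume p₃ q₃ (Cm m f g)
      ≤ liminf (fun j => lorentzNormC volume p₃ q₃ (stepSample (u j) (Cm m f g))) atTop :=
        lorentzNormC_le_liminf_of_tendsto hq₃ fun x =>
          (tendsto_stepSample (continuous_Cm hm hloc hf hg) x).comp hu
    _ ≤ _ := (liminf_le_liminf (.of_forall hstep_u)).trans_eq hlim.liminf_eq

theorem exponents_ne_zero_ne_top_ne_zero {p q : ℝ≥0∞}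
    (h : (1 < p ∧ p < ∞ ∧ 1 < q ∧ q < ∞) ∨ (p = 1 ∧ q = ∞)) : p ≠ 0 ∧ p ≠ ∞ ∧ q ≠ 0 := by
  rcases h with ⟨hp, hp', hq, -⟩ | ⟨rfl, rfl⟩
  · exact ⟨hp.ne_bot, hp'.ne, hq.ne_bot⟩
  · simp

end Transference

/-- Transference from `ℤ` to `ℝ`: if the discrete operators `D_{m̃_{t,p}}` are uniformly bounded
on Lorentz sequence spaces, then `C_m` is bounded on Lorentz spaces over `ℝ`, with a constant
depending only on `C` and the exponents. -/
theorem stmt1 (p₁ q₁ p₂ q₂ p₃ q₃ : ℝ≥0∞)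
    (h₁ : (1 < p₁ ∧ p₁ < ∞ ∧ 1 < q₁ ∧ q₁ < ∞) ∨ (p₁ = 1 ∧ q₁ = ∞))
    (h₂ : (1 < p₂ ∧ p₂ < ∞ ∧ 1 < q₂ ∧ q₂ < ∞) ∨ (p₂ = 1 ∧ q₂ = ∞))
    (hp₃ : 0 < p₃) (hp₃' : p₃ < ∞) (hq₃ : 0 < q₃) (hq₃' : q₃ < ∞)
    (p : ℝ) (hp : 1 / p = 1 / p₁.toReal + 1 / p₂.toReal - 1 / p₃.toReal)
    (C : ℝ) (hC : 0 < C) :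
    ∃ C' : ℝ, 0 < C' ∧
      ∀ m : ℝ × ℝ → ℂ, Measurable m → LocallyBounded m →
        (∀ t : ℝ, 0 < t → ∀ a b : ℤ → ℂ,
            (Function.support a).Finite → (Function.support b).Finite →
            lorentzNormC Measure.count p₃ q₃ (Dop m t p a b) ≤
              ENNReal.ofReal C * (lorentzNormC Measure.count p₁ q₁ a *
                lorentzNormC Measure.count p₂ q₂ b)) →
        ∀ f g : 𝓢(ℝ, ℂ), HasCompactSupport (𝓕 (f : ℝ → ℂ)) →
          HasCompactSupport (𝓕 (g : ℝ → ℂ)) →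
          lorentzNormC volume p₃ q₃ (Cm m f g) ≤
            ENNReal.ofReal C' * (lorentzNormC volume p₁ q₁ (fun x => f x) *
              lorentzNormC volume p₂ q₂ (fun x => g x)) := by
  obtain ⟨hp₁, hp₁', hq₁⟩ := exponents_ne_zero_ne_top_ne_zero h₁
  obtain ⟨hp₂, hp₂', hq₂⟩ := exponents_ne_zero_ne_top_ne_zero h₂
  exact ⟨C, hC, fun m hm hloc H f g hf hg => stmt1_general hp₁ hp₁' hq₁ hp₂ hp₂' hq₂ hp₃.ne'
    hp₃'.ne hq₃.ne' hp C hm hloc ((eventually_gt_atTop 0).mono H).frequently f g hf hg⟩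
end

section
/- Let ψ be a Schwartz function on ℝ with ψ̂(x)=1 for all x∈[−1,1] and supp ψ̂⊂[−2,2]. There exists a constant C>0, depending only on ψ, such that for every R>0, with M=max(1,R), every 0<r≤1, and every f∈E_R, one has |f(x)|^r ≤ C ∫_ℝ |f(x−y)|^r · M|ψ(My)|^r dy for all x∈ℝ. -/
open MeasureTheory Complex SchwartzMap Filter
open scoped FourierTransform ENNReal NNReal Real

/-!
Write `D_t^1 ψ (y) = t⁻¹ ψ (t⁻¹ y)` with `t = M⁻¹`. Since `𝓕 ψ = 1` on `[-1, 1]`, every `f ∈ E_R`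
with `R ≤ M` is reproduced by convolution with `D_t^1 ψ`, so `|f x|` is at most the `L¹` norm of
`G y = f (x - y) * D_t^1 ψ y`. The spectrum of `G` lies in `[-L M, L M]`, where `L` depends only on
`ψ`, and the reproducing formula applied to `G` gives the Nikolskii inequality `‖G‖_∞ ≤ C M ‖G‖₁`.
Then `‖G‖₁ ≤ ‖G‖_∞ ^ (1 - r) * ∫ |G| ^ r ≤ (C M ‖G‖₁) ^ (1 - r) * ∫ |G| ^ r`, and cancelling
`‖G‖₁ ^ (1 - r)` leaves the factor `M ^ (1 - r) * |M ψ (M y)| ^ r = M |ψ (M y)| ^ r`.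
-/

open scoped Pointwise

section Fourier

variable {V E : Type*} [NormedAddCommGroup V] [InnerProductSpace ℝ V] [FiniteDimensional ℝ V]
  [MeasurableSpace V] [BorelSpace V] [NormedAddCommGroup E] [NormedSpace ℂ E]

lemma tsupport_fourierInv (g : V → E) : tsupport (𝓕⁻ g) = -tsupport (𝓕 g) := by
  have h : 𝓕⁻ g = 𝓕 g ∘ Homeomorph.neg V := funext fun ξ => Real.fourierInv_eq_fourier_neg g ξ
  rw [h, tsupport_comp_eq_preimage]
  rfl

lemma fourier_comp_sub_left (g : V → E) (x ξ : V) :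
    𝓕 (fun y => g (x - y)) ξ = Real.fourierChar (-inner ℝ x ξ) • 𝓕⁻ g ξ := by
  rw [Real.fourier_eq, Real.fourierInv_eq, Circle.smul_def, ← integral_smul,
    ← integral_sub_left_eq_self _ volume x]
  refine integral_congr_ae (Eventually.of_forall fun y => ?_)
  simp only [sub_sub_cancel, ← Circle.smul_def]
  rw [smul_smul, ← AddChar.map_add_eq_mul, inner_sub_left]
  ring_nf

end Fourier

lemma integrable_one_add_norm_pow_mul {V E : Type*} [NormedAddCommGroup V] [NormedSpace ℝ V]
    [MeasurableSpace V] [BorelSpace V] [SecondCountableTopology V] [NormedAddCommGroup E]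
    [NormedSpace ℝ E] (μ : Measure V) [μ.HasTemperateGrowth] (φ : 𝓢(V, E)) (k : ℕ) :
    Integrable (fun y => (1 + ‖y‖) ^ k * ‖φ y‖) μ := by
  simp only [add_comm (1 : ℝ), add_pow, one_pow, mul_one, Finset.sum_mul,
    mul_right_comm _ _ ‖φ _‖]
  exact integrable_finsetSum _ fun i _ => (φ.integrable_pow_mul μ i).mul_const _

lemma lintegral_rpow_le_of_le_mul_lintegral {α : Type*} [MeasurableSpace α] {μ : Measure α}
    {g : α → ℝ≥0∞} {D : ℝ≥0∞} (hD : D ≠ ∞) (hg : ∫⁻ y, g y ∂μ ≠ ∞)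
    (hgD : ∀ y, g y ≤ D * ∫⁻ z, g z ∂μ) {r : ℝ} (hr0 : 0 < r) (hr1 : r ≤ 1) :
    (∫⁻ y, g y ∂μ) ^ r ≤ D ^ (1 - r) * ∫⁻ y, g y ^ r ∂μ := by
  set A := ∫⁻ y, g y ∂μ
  have hr : 0 ≤ 1 - r := sub_nonneg.2 hr1
  have split (b : ℝ≥0∞) : b ^ (1 - r) * b ^ r = b := by
    rw [← ENNReal.rpow_add_of_nonneg _ _ hr hr0.le, sub_add_cancel, ENNReal.rpow_one]
  rcases eq_or_ne A 0 with hA | hA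
  · simp [hA, ENNReal.zero_rpow_of_pos hr0]
  have hA_top : A ^ (1 - r) ≠ ∞ := ENNReal.rpow_ne_top_of_nonneg hr hg
  have hA_ne : A ^ (1 - r) ≠ 0 := (ENNReal.rpow_pos (pos_iff_ne_zero.2 hA) hg).ne'
  rw [← ENNReal.mul_le_mul_iff_right hA_ne hA_top]
  calc A ^ (1 - r) * A ^ r = ∫⁻ y, g y ^ (1 - r) * g y ^ r ∂μ := by simp only [split, A]
    _ ≤ ∫⁻ y, (D * A) ^ (1 - r) * g y ^ r ∂μ := by gcongr with y; exact hgD y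
    _ = (D * A) ^ (1 - r) * ∫⁻ y, g y ^ r ∂μ :=
        lintegral_const_mul' _ _ (ENNReal.rpow_ne_top_of_nonneg hr (ENNReal.mul_ne_top hD hg))
    _ = A ^ (1 - r) * (D ^ (1 - r) * ∫⁻ y, g y ^ r ∂μ) := by
        rw [ENNReal.mul_rpow_of_nonneg _ _ hr, mul_left_comm, mul_assoc]

lemma mul_rpow_one_sub_mul_mul_rpow_le {A M b r : ℝ} (hA : 0 ≤ A) (hM : 0 < M) (hb : 0 ≤ b)
    (hr0 : 0 ≤ r) (hr1 : r ≤ 1) :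
    (A * M) ^ (1 - r) * (M * b) ^ r ≤ max 1 A * (M * b ^ r) := by
  have hMr : M ^ (1 - r) * M ^ r = M := by rw [← Real.rpow_add hM, sub_add_cancel, Real.rpow_one]
  have hAr : A ^ (1 - r) ≤ max 1 A := calc
    A ^ (1 - r) ≤ max 1 A ^ (1 - r) := by gcongr; exact le_max_right _ _
    _ ≤ max 1 A ^ (1 : ℝ) :=
        Real.rpow_le_rpow_of_exponent_le (le_max_left _ _) (sub_le_self 1 hr0)
    _ = max 1 A := Real.rpow_one _
  calc (A * M) ^ (1 - r) * (M * b) ^ r = A ^ (1 - r) * (M ^ (1 - r) * M ^ r * b ^ r) := by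
        rw [Real.mul_rpow hA hM.le, Real.mul_rpow hM.le hb]; ring
    _ ≤ max 1 A * (M * b ^ r) := by rw [hMr]; gcongr

/-- The `L¹`-normalized dilation `D_t^1 φ`, that is `y ↦ t⁻¹ φ (t⁻¹ y)`, of a Schwartz function `φ`
by `t > 0`, used as the kernel of the reproducing formula. The paper's `M ψ (M y)` has `t = M⁻¹`. -/
noncomputable def l1Dilation {t : ℝ} (ht : 0 < t) (φ : 𝓢(ℝ, ℂ)) : 𝓢(ℝ, ℂ) :=
  t⁻¹ • SchwartzMap.compCLMOfContinuousLinearEquiv ℂ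
    (ContinuousLinearEquiv.unitsEquivAut ℝ (Units.mk0 t ht.ne')⁻¹) φ

section l1Dilation

variable {t : ℝ} (ht : 0 < t) (φ : 𝓢(ℝ, ℂ))

lemma l1Dilation_apply (y : ℝ) : l1Dilation ht φ y = t⁻¹ • φ (t⁻¹ * y) := by
  simp [l1Dilation, mul_comm]

lemma norm_l1Dilation_apply (y : ℝ) : ‖l1Dilation ht φ y‖ = t⁻¹ * ‖φ (t⁻¹ * y)‖ := by
  rw [l1Dilation_apply, norm_smul, Real.norm_of_nonneg (inv_pos.2 ht).le]

lemma integral_mul_l1Dilation (f : ℝ → ℂ) :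
    ∫ y, f y * l1Dilation ht φ y = ∫ y, f (t * y) * φ y := by
  have h := Measure.integral_comp_mul_left (fun y => f (t * y) * φ y) t⁻¹
  simp only [mul_inv_cancel_left₀ ht.ne', inv_inv, abs_of_pos ht] at h
  simp only [l1Dilation_apply, mul_smul_comm]
  rw [integral_smul, h, smul_smul, inv_mul_cancel₀ ht.ne', one_smul]

lemma fourier_l1Dilation (ξ : ℝ) :
    𝓕 (l1Dilation ht φ : ℝ → ℂ) ξ = 𝓕 (φ : ℝ → ℂ) (t * ξ) := by
  simp only [Real.fourier_real_eq_integral_exp_smul, smul_eq_mul]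
  rw [integral_mul_l1Dilation ht φ fun y => Complex.exp (↑(-2 * π * y * ξ) * Complex.I)]
  refine integral_congr_ae (Eventually.of_forall fun y => ?_)
  ring_nf

lemma tsupport_fourier_l1Dilation_subset {K : ℝ}
    (hφ : tsupport (𝓕 (φ : ℝ → ℂ)) ⊆ Set.Icc (-K) K) :
    tsupport (𝓕 (l1Dilation ht φ : ℝ → ℂ)) ⊆ Set.Icc (-(K * t⁻¹)) (K * t⁻¹) := by
  refine closure_minimal (fun ξ hξ => ?_) isClosed_Icc
  rw [Function.mem_support, fourier_l1Dilation] at hξ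
  have hK : |t * ξ| ≤ K := abs_le.2 (hφ (subset_tsupport _ hξ))
  rw [abs_mul, abs_of_pos ht] at hK
  exact abs_le.1 (by rwa [← div_eq_mul_inv, le_div_iff₀' ht])

lemma ofReal_rpow_mul_enorm_l1Dilation_rpow_le {A r : ℝ} (hA : 0 ≤ A) (hr0 : 0 ≤ r)
    (hr1 : r ≤ 1) (y : ℝ) :
    ENNReal.ofReal (A * t⁻¹) ^ (1 - r) * ‖l1Dilation ht φ y‖ₑ ^ r ≤
      ENNReal.ofReal (max 1 A) * ENNReal.ofReal (t⁻¹ * ‖φ (t⁻¹ * y)‖ ^ r) := by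
  rw [← ofReal_norm, norm_l1Dilation_apply,
    ENNReal.ofReal_rpow_of_nonneg (by positivity) (sub_nonneg.2 hr1),
    ENNReal.ofReal_rpow_of_nonneg (by positivity) hr0, ← ENNReal.ofReal_mul (by positivity),
    ← ENNReal.ofReal_mul (by positivity)]
  exact ENNReal.ofReal_le_ofReal
    (mul_rpow_one_sub_mul_mul_rpow_le hA (inv_pos.2 ht) (norm_nonneg _) hr0 hr1)

end l1Dilation

namespace InER

variable {R : ℝ} {f : ℝ → ℂ}

lemma exists_norm_le (hf : InER R f) :
    ∃ (C : ℝ) (k : ℕ), 0 ≤ C ∧ ∀ x, ‖f x‖ ≤ C * (1 + |x|) ^ k := by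
  obtain ⟨C, k, hC⟩ := hf.2.1
  exact ⟨C, k, by simpa using (norm_nonneg _).trans (hC 0), hC⟩

lemma integral_mul_eq_zero (hf : InER R f) {u : 𝓢(ℝ, ℂ)}
    (hu : Disjoint (tsupport (𝓕 (u : ℝ → ℂ))) (Set.Icc (-R) R)) : ∫ y, f y * u y = 0 := by
  have h := hf.2.2 (𝓕⁻ u) ?_
  · rwa [← SchwartzMap.fourier_coe, FourierTransform.fourier_fourierInv_eq] at h
  · rw [SchwartzMap.fourierInv_coe, tsupport_fourierInv, Set.disjoint_left]
    exact fun ξ hξ hR => Set.disjoint_left.1 hu hξ ⟨neg_le_neg hR.2, neg_le.1 hR.1⟩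

lemma integrable_mul (hf : InER R f) (u : 𝓢(ℝ, ℂ)) : Integrable fun y => f y * u y := by
  obtain ⟨C, k, hfC⟩ := hf.2.1
  refine ((integrable_one_add_norm_pow_mul volume u k).const_mul C).mono'
    (hf.1.mul u.continuous).aestronglyMeasurable (Eventually.of_forall fun y => ?_)
  rw [norm_mul, ← mul_assoc]
  gcongr
  exact hfC y

lemma integral_mul_eq_of_eqOn_fourier (hf : InER R f) {u v : 𝓢(ℝ, ℂ)} {U : Set ℝ} (hU : IsOpen U)
    (hRU : Set.Icc (-R) R ⊆ U) (huv : Set.EqOn (𝓕 (u : ℝ → ℂ)) (𝓕 (v : ℝ → ℂ)) U) :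
    ∫ y, f y * u y = ∫ y, f y * v y := by
  have h_sub : 𝓕 (u - v) = 𝓕 u - 𝓕 v := (FourierTransform.fourierCLM ℂ 𝓢(ℝ, ℂ)).map_sub u v
  have h_disj : Disjoint (tsupport (𝓕 ((u - v : 𝓢(ℝ, ℂ)) : ℝ → ℂ))) U := by
    refine Disjoint.closure_left (Set.disjoint_left.2 fun ξ hξ hξU => hξ ?_) hU
    rw [← SchwartzMap.fourier_coe, h_sub]
    exact sub_eq_zero.2 (huv hξU)
  rw [← sub_eq_zero, ← integral_sub (hf.integrable_mul u) (hf.integrable_mul v),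
    ← hf.integral_mul_eq_zero (h_disj.mono_right hRU)]
  simp only [sub_apply, mul_sub]

lemma comp_sub_left (hf : InER R f) (x : ℝ) : InER R fun y => f (x - y) := by
  refine ⟨hf.1.comp (by fun_prop), ?_, fun φ hφ => ?_⟩
  · obtain ⟨C, k, hC, hfC⟩ := hf.exists_norm_le
    refine ⟨C * (1 + |x|) ^ k, k, fun y => (hfC _).trans ?_⟩
    rw [mul_assoc, ← mul_pow]
    gcongr
    linarith [abs_sub x y, mul_nonneg (abs_nonneg x) (abs_nonneg y)]
  · obtain ⟨v, hv⟩ : ∃ v : 𝓢(ℝ, ℂ), ∀ y, v y = 𝓕 φ (x - y) :=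
      ⟨SchwartzMap.compCLMOfContinuousLinearEquiv ℂ (ContinuousLinearEquiv.neg ℝ)
        (SchwartzMap.compSubConstCLM ℂ (-x) (𝓕 φ)), fun y => by simp [neg_add_eq_sub]⟩
    have hv_supp : tsupport (𝓕 (v : ℝ → ℂ)) ⊆ tsupport (φ : ℝ → ℂ) := by
      refine closure_mono fun ξ hξ hφξ => hξ ?_
      rw [funext hv, fourier_comp_sub_left, ← SchwartzMap.fourierInv_coe,
        FourierTransform.fourierInv_fourier_eq, hφξ, smul_zero]
    rw [← hf.integral_mul_eq_zero (hφ.mono_left hv_supp), ← integral_sub_left_eq_self _ volume x]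
    simp only [sub_sub_cancel, hv, SchwartzMap.fourier_coe]

lemma mul_schwartz (hf : InER R f) {S : ℝ} {u : 𝓢(ℝ, ℂ)}
    (hu : tsupport (𝓕 (u : ℝ → ℂ)) ⊆ Set.Icc (-S) S) : InER (R + S) fun y => f y * u y := by
  refine ⟨hf.1.mul u.continuous, ?_, fun φ hφ => ?_⟩
  · obtain ⟨C, k, hC, hfC⟩ := hf.exists_norm_le
    refine ⟨C * SchwartzMap.seminorm ℝ 0 0 u, k, fun y => ?_⟩
    rw [norm_mul, mul_right_comm]
    gcongr
    exacts [hfC y, SchwartzMap.norm_le_seminorm ℝ u y]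
  · -- `u * 𝓕 φ` is the Fourier transform of `𝓕⁻ u ⋆ φ`, supported `S`-close to `φ`.
    set g := SchwartzMap.convolution (ContinuousLinearMap.mul ℂ ℂ) (𝓕⁻ u) φ
    have hg_apply (y : ℝ) : 𝓕 (g : ℝ → ℂ) y = u y * 𝓕 (φ : ℝ → ℂ) y := by
      rw [← SchwartzMap.fourier_coe, SchwartzMap.fourier_convolution,
        FourierTransform.fourier_fourierInv_eq]
      simp [SchwartzMap.fourier_coe]
    have hg_supp : tsupport (g : ℝ → ℂ) ⊆ Set.Icc (-S) S + tsupport (φ : ℝ → ℂ) := by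
      refine closure_minimal ?_ ((isClosed_tsupport _).add_left_of_isCompact isCompact_Icc)
      rw [funext (SchwartzMap.convolution_apply (ContinuousLinearMap.mul ℂ ℂ) (𝓕⁻ u) φ)]
      refine (support_convolution_subset _).trans
        (Set.add_subset_add ((subset_tsupport _).trans ?_) (subset_tsupport _))
      rw [SchwartzMap.fourierInv_coe, tsupport_fourierInv]
      simpa using Set.neg_subset_neg.2 hu
    have hg_disj : Disjoint (tsupport (g : ℝ → ℂ)) (Set.Icc (-R) R) := by
      refine Set.disjoint_left.2 fun ξ hξ hR => ?_
      obtain ⟨s, hs, η, hη, rfl⟩ := Set.mem_add.1 (hg_supp hξ)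
      exact Set.disjoint_left.1 hφ hη
        ⟨by linarith [hs.2, hR.1], by linarith [hs.1, hR.2]⟩
    simpa only [hg_apply, mul_assoc] using hf.2.2 g hg_disj

lemma continuousOn_integral_comp_mul (hf : InER R f) (ψ : 𝓢(ℝ, ℂ)) (a : ℝ) :
    ContinuousOn (fun s => ∫ y, f (s * y) * ψ y) (Set.Icc 0 a) := by
  obtain ⟨C, k, hC, hfC⟩ := hf.exists_norm_le
  have hf_cont := hf.1
  refine continuousOn_of_dominated
    (bound := fun y => C * (1 + a) ^ k * ((1 + ‖y‖) ^ k * ‖ψ y‖))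
    (fun s _ => Continuous.aestronglyMeasurable (by fun_prop))
    (fun s hs => Eventually.of_forall fun y => ?_)
    ((integrable_one_add_norm_pow_mul volume ψ k).const_mul _)
    (Eventually.of_forall fun y => Continuous.continuousOn (by fun_prop))
  have h_growth : 1 + |s * y| ≤ (1 + a) * (1 + |y|) := by
    rw [abs_mul, abs_of_nonneg hs.1]
    nlinarith [mul_le_mul_of_nonneg_right hs.2 (abs_nonneg y), abs_nonneg y, hs.1.trans hs.2]
  calc ‖f (s * y) * ψ y‖ ≤ C * (1 + |s * y|) ^ k * ‖ψ y‖ := by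
        rw [norm_mul]; gcongr; exact hfC _
    _ ≤ C * ((1 + a) * (1 + |y|)) ^ k * ‖ψ y‖ := by gcongr
    _ = C * (1 + a) ^ k * ((1 + ‖y‖) ^ k * ‖ψ y‖) := by rw [mul_pow, Real.norm_eq_abs]; ring

section Reproducing

variable {ψ : 𝓢(ℝ, ℂ)} (hψ : ∀ x ∈ Set.Icc (-1 : ℝ) 1, 𝓕 (ψ : ℝ → ℂ) x = 1) {a : ℝ}

include hψ

lemma integral_comp_mul_eq_of_mem_Ioo (hf : InER R f) (haR : a * R ≤ 1) {s t : ℝ}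
    (hs : s ∈ Set.Ioo 0 a) (ht : t ∈ Set.Ioo 0 a) :
    ∫ y, f (s * y) * ψ y = ∫ y, f (t * y) * ψ y := by
  have h_lt {b ξ : ℝ} (hb : b ∈ Set.Ioo 0 a) (hξ : ξ ∈ Set.Icc (-R) R) : |b * ξ| < 1 := by
    rw [abs_mul, abs_of_pos hb.1]
    rcases (abs_nonneg ξ).eq_or_lt with h0 | h0
    · simp [← h0]
    · nlinarith [mul_lt_mul_of_pos_right hb.2 h0, abs_le.2 hξ, hb.1.trans hb.2]
  have hU : IsOpen {ξ : ℝ | |s * ξ| < 1 ∧ |t * ξ| < 1} :=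
    (isOpen_lt (by fun_prop : Continuous fun ξ => |s * ξ|) continuous_const).inter
      (isOpen_lt (by fun_prop : Continuous fun ξ => |t * ξ|) continuous_const)
  rw [← integral_mul_l1Dilation hs.1, ← integral_mul_l1Dilation ht.1]
  refine hf.integral_mul_eq_of_eqOn_fourier hU (fun ξ hξ => ⟨h_lt hs hξ, h_lt ht hξ⟩) ?_
  rintro ξ ⟨hsξ, htξ⟩
  rw [fourier_l1Dilation, fourier_l1Dilation, hψ _ (abs_le.1 hsξ.le), hψ _ (abs_le.1 htξ.le)]

lemma integral_mul_l1Dilation_eq (hf : InER R f) (ha : 0 < a) (haR : a * R ≤ 1) :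
    ∫ y, f y * l1Dilation ha ψ y = f 0 := by
  -- `s ↦ ∫ f (s y) ψ y` is constant for `0 < s < a`, hence by continuity on `[0, a]`.
  have h_const : Set.EqOn (fun s => ∫ y, f (s * y) * ψ y) (fun _ => ∫ y, f (a / 2 * y) * ψ y)
      (Set.Icc 0 a) :=
    Set.EqOn.of_subset_closure
      (fun s hs => hf.integral_comp_mul_eq_of_mem_Ioo hψ haR hs ⟨half_pos ha, half_lt_self ha⟩)
      (hf.continuousOn_integral_comp_mul ψ a) continuousOn_const Set.Ioo_subset_Icc_self
      (closure_Ioo ha.ne).ge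
  have h_mean : ∫ y, ψ y = 1 := by
    simpa [Real.fourier_real_eq_integral_exp_smul] using hψ 0 (by simp)
  calc ∫ y, f y * l1Dilation ha ψ y = ∫ y, f (a * y) * ψ y := integral_mul_l1Dilation ha ψ f
    _ = ∫ y, f (0 * y) * ψ y :=
        (h_const (Set.right_mem_Icc.2 ha.le)).trans (h_const (Set.left_mem_Icc.2 ha.le)).symm
    _ = f 0 := by simp only [zero_mul, integral_const_mul, h_mean, mul_one]

lemma integral_sub_mul_l1Dilation_eq (hf : InER R f) (ha : 0 < a) (haR : a * R ≤ 1) (x : ℝ) :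
    ∫ y, f (x - y) * l1Dilation ha ψ y = f x := by
  simpa using (hf.comp_sub_left x).integral_mul_l1Dilation_eq hψ ha haR

lemma enorm_le_mul_lintegral_enorm (hf : InER R f) (ha : 0 < a) (haR : a * R ≤ 1) {B : ℝ}
    (hB : ∀ y, ‖ψ y‖ ≤ B) (x : ℝ) :
    ‖f x‖ₑ ≤ ENNReal.ofReal (a⁻¹ * B) * ∫⁻ y, ‖f y‖ₑ := by
  have hDB (y : ℝ) : ‖l1Dilation ha ψ y‖ₑ ≤ ENNReal.ofReal (a⁻¹ * B) := by
    rw [← ofReal_norm, norm_l1Dilation_apply]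
    gcongr
    exact hB _
  calc ‖f x‖ₑ = ‖∫ y, f (x - y) * l1Dilation ha ψ y‖ₑ := by
        rw [hf.integral_sub_mul_l1Dilation_eq hψ ha haR x]
    _ ≤ ∫⁻ y, ‖f (x - y) * l1Dilation ha ψ y‖ₑ := enorm_integral_le_lintegral_enorm _
    _ ≤ ∫⁻ y, ENNReal.ofReal (a⁻¹ * B) * ‖f (x - y)‖ₑ := by
        gcongr with y
        rw [enorm_mul, mul_comm]
        gcongr
        exact hDB y
    _ = ENNReal.ofReal (a⁻¹ * B) * ∫⁻ y, ‖f y‖ₑ := by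
        rw [lintegral_const_mul' _ _ ENNReal.ofReal_ne_top,
          lintegral_sub_left_eq_self (fun y => ‖f y‖ₑ) x]

lemma enorm_rpow_le (hf : InER R f) {t : ℝ} (ht : 0 < t) (htR : t * R ≤ 1) {K : ℝ} (hK : 0 ≤ K)
    (hψK : tsupport (𝓕 (ψ : ℝ → ℂ)) ⊆ Set.Icc (-K) K) {B : ℝ} (hB : ∀ y, ‖ψ y‖ ≤ B)
    {r : ℝ} (hr0 : 0 < r) (hr1 : r ≤ 1) (x : ℝ) :
    ‖f x‖ₑ ^ r ≤ ENNReal.ofReal ((1 + K) * B * t⁻¹) ^ (1 - r) *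
      ∫⁻ y, ‖f (x - y) * l1Dilation ht ψ y‖ₑ ^ r := by
  set G : ℝ → ℂ := fun y => f (x - y) * l1Dilation ht ψ y
  have hG : InER (R + K * t⁻¹) G :=
    (hf.comp_sub_left x).mul_schwartz (tsupport_fourier_l1Dilation_subset ht ψ hψK)
  have hG_int : Integrable G := (hf.comp_sub_left x).integrable_mul _
  have ha : 0 < t / (1 + K) := by positivity
  have haG : t / (1 + K) * (R + K * t⁻¹) ≤ 1 := by
    rw [div_mul_eq_mul_div, div_le_one (by positivity), mul_add, mul_left_comm,
      mul_inv_cancel₀ ht.ne', mul_one]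
    gcongr
  have hG_sup (z : ℝ) : ‖G z‖ₑ ≤ ENNReal.ofReal ((1 + K) * B * t⁻¹) * ∫⁻ y, ‖G y‖ₑ := by
    convert hG.enorm_le_mul_lintegral_enorm hψ ha haG hB z using 3
    rw [inv_div, div_eq_mul_inv, mul_right_comm]
  calc ‖f x‖ₑ ^ r = ‖∫ y, G y‖ₑ ^ r := by
        rw [hf.integral_sub_mul_l1Dilation_eq hψ ht htR x]
    _ ≤ (∫⁻ y, ‖G y‖ₑ) ^ r := by gcongr; exact enorm_integral_le_lintegral_enorm _
    _ ≤ ENNReal.ofReal ((1 + K) * B * t⁻¹) ^ (1 - r) * ∫⁻ y, ‖G y‖ₑ ^ r :=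
        lintegral_rpow_le_of_le_mul_lintegral ENNReal.ofReal_ne_top hG_int.2.ne hG_sup hr0 hr1

end Reproducing

end InER

theorem stmt4_general (ψ : 𝓢(ℝ, ℂ))
    (hψ1 : ∀ x ∈ Set.Icc (-1 : ℝ) 1, 𝓕 (ψ : ℝ → ℂ) x = 1)
    (hψ2 : HasCompactSupport (𝓕 (ψ : ℝ → ℂ))) :
    ∃ C : ℝ, 0 < C ∧ ∀ R M : ℝ, 0 < M → R ≤ M → ∀ r : ℝ, 0 < r → r ≤ 1 →
      ∀ f : ℝ → ℂ, InER R f → ∀ x : ℝ,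
        ‖f x‖ₑ ^ r ≤ ENNReal.ofReal C *
          ∫⁻ y : ℝ, ‖f (x - y)‖ₑ ^ r * ENNReal.ofReal (M * ‖ψ (M * y)‖ ^ r) := by
  obtain ⟨K, hK, hψK⟩ : ∃ K : ℝ, 0 < K ∧ tsupport (𝓕 (ψ : ℝ → ℂ)) ⊆ Set.Icc (-K) K := by
    simpa [Real.closedBall_eq_Icc] using hψ2.isCompact.isBounded.subset_closedBall_lt 0 0
  set B := SchwartzMap.seminorm ℝ 0 0 ψ
  have hB := SchwartzMap.norm_le_seminorm ℝ ψ
  refine ⟨max 1 ((1 + K) * B), by positivity, fun R M hM hRM r hr0 hr1 f hf x => ?_⟩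
  have ht : 0 < M⁻¹ := inv_pos.2 hM
  refine (hf.enorm_rpow_le hψ1 ht (by rwa [inv_mul_le_one₀ hM]) hK.le hψK hB hr0 hr1 x).trans ?_
  rw [← lintegral_const_mul' _ _ (ENNReal.rpow_ne_top_of_nonneg (sub_nonneg.2 hr1)
    ENNReal.ofReal_ne_top), ← lintegral_const_mul' _ _ ENNReal.ofReal_ne_top]
  refine lintegral_mono fun y => ?_
  rw [enorm_mul, ENNReal.mul_rpow_of_nonneg _ _ hr0.le, mul_left_comm,
    mul_left_comm (ENNReal.ofReal (max 1 _))]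
  refine mul_le_mul_right ?_ _
  simpa only [inv_inv] using ofReal_rpow_mul_enorm_l1Dilation_rpow_le (A := (1 + K) * B)
    ht ψ (by positivity) hr0.le hr1 y

/-- Pointwise domination for powers of exponential type functions: for `f ∈ E_R`, `0 < r ≤ 1`
and `M = max(1, R)`, one has `|f(x)|^r ≤ C ∫ |f(x−y)|^r · M|ψ(My)|^r dy`. -/
theorem stmt4 (ψ : 𝓢(ℝ, ℂ))
    (hψ1 : ∀ x ∈ Set.Icc (-1 : ℝ) 1, 𝓕 (ψ : ℝ → ℂ) x = 1)
    (hψ2 : tsupport (𝓕 (ψ : ℝ → ℂ)) ⊆ Set.Icc (-2 : ℝ) 2) :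
    ∃ C : ℝ, 0 < C ∧ ∀ R : ℝ, 0 < R → ∀ r : ℝ, 0 < r → r ≤ 1 →
      ∀ f : ℝ → ℂ, InER R f → ∀ x : ℝ,
        (‖f x‖₊ : ℝ≥0∞) ^ r ≤ ENNReal.ofReal C *
          ∫⁻ y : ℝ, (‖f (x - y)‖₊ : ℝ≥0∞) ^ r *
            ENNReal.ofReal (max 1 R * ‖ψ (max 1 R * y)‖ ^ r) := by
  obtain ⟨C, hC, h⟩ := stmt4_general ψ hψ1
    (isCompact_Icc.of_isClosed_subset (isClosed_tsupport _) hψ2)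
  exact ⟨C, hC, fun R _ => h R (max 1 R) (by positivity) (le_max_right _ _)⟩
end

section
/- Let ψ be a Schwartz function on ℝ and let 1≤s≤∞. There exists a constant C>0, depending only on ψ and s, such that for every M≥1 one has ∑_{k∈ℤ} ( ∫_{−M/2}^{M/2} |ψ(x+Mk)|^s dx )^{1/s} ≤ ‖ψ‖_{L^s(ℝ)} + C. Consequently, with ψ_M(x)=Mψ(Mx), one has ∑_{k∈ℤ} ‖T_{−k}ψ_M‖_{L^s([−1/2,1/2])} ≤ C' M^{1−1/s} for a constant C' depending only on ψ and s. -/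
open MeasureTheory Complex SchwartzMap Filter
open scoped FourierTransform ENNReal NNReal Real

/-!
For `x` in the window `[-M/2, M/2]` and `k ≠ 0` one has `|x + M k| ≥ M |k| / 2`, so decay of order
`n` bounds `f (x + M k)` by a multiple of `(M |k|)⁻ⁿ`. The window contributes a factor `M^(1/s)`,
which is absorbed by `M⁻ⁿ` as soon as `1/s ≤ n`, and the remaining `|k|⁻ⁿ` is summable if `n > 1`.
The term `k = 0` is bounded by the full norm. The dilated sum is a multiple of the first one by the
change of variables `y = M x`.
-/

section Decay

variable {E : Type*} [NormedAddCommGroup E] {f : ℝ → E} {n : ℕ} {A M : ℝ}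

theorem half_mul_abs_le_abs_add_mul {x : ℝ} (hx : |x| ≤ M / 2) {k : ℤ} (hk : k ≠ 0) :
    M * |(k : ℝ)| / 2 ≤ |x + M * k| := by
  have hk_one : 1 ≤ |(k : ℝ)| := by exact_mod_cast Int.one_le_abs hk
  have hM : 0 ≤ M := by linarith [abs_nonneg x]
  have h_triangle : M * |(k : ℝ)| ≤ |x + M * k| + |x| := by
    simpa [abs_mul, abs_of_nonneg hM] using abs_sub (x + M * k) x
  nlinarith

theorem norm_translate_le_of_decay (hf : ∀ x, |x| ^ n * ‖f x‖ ≤ A) (hM : 0 < M)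
    {x : ℝ} (hx : |x| ≤ M / 2) {k : ℤ} (hk : k ≠ 0) :
    ‖f (x + M * k)‖ ≤ 2 ^ n * A / (M * |(k : ℝ)|) ^ n := by
  have : 0 < |(k : ℝ)| := by simpa using hk
  have h_scaled : (M * |(k : ℝ)| / 2) ^ n * ‖f (x + M * k)‖ ≤ A := calc
    _ ≤ |x + M * k| ^ n * ‖f (x + M * k)‖ := by
      gcongr
      exact half_mul_abs_le_abs_add_mul hx hk
    _ ≤ A := hf (x + M * k)
  rw [div_pow, div_mul_eq_mul_div, div_le_iff₀ (by positivity)] at h_scaled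
  rw [le_div_iff₀ (by positivity)]
  linarith

theorem ofReal_rpow_inv_toReal_le_ofReal_pow {s : ℝ≥0∞} (hsn : s⁻¹ ≤ n) (hM : 1 ≤ M) :
    ENNReal.ofReal M ^ s.toReal⁻¹ ≤ ENNReal.ofReal (M ^ n) := by
  have h_exponent : s.toReal⁻¹ ≤ n := by
    simpa using ENNReal.toReal_mono (ENNReal.natCast_ne_top n) hsn
  calc ENNReal.ofReal M ^ s.toReal⁻¹ ≤ ENNReal.ofReal M ^ (n : ℝ) :=
        ENNReal.rpow_le_rpow_of_exponent_le (by simpa using hM) h_exponent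
    _ = ENNReal.ofReal (M ^ n) := by
        rw [ENNReal.rpow_natCast, ENNReal.ofReal_pow (by linarith)]

theorem eLpNorm_translate_Icc_le_of_decay {s : ℝ≥0∞} (hf : ∀ x, |x| ^ n * ‖f x‖ ≤ A)
    (hsn : s⁻¹ ≤ n) (hM : 1 ≤ M) {k : ℤ} (hk : k ≠ 0) :
    eLpNorm (fun x ↦ f (x + M * k)) s (volume.restrict (Set.Icc (-(M / 2)) (M / 2))) ≤
      ENNReal.ofReal (2 ^ n * A / |(k : ℝ)| ^ n) := by
  have hM_pos : 0 < M := by linarith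
  have h_bound : ∀ᵐ x ∂volume.restrict (Set.Icc (-(M / 2)) (M / 2)),
      ‖f (x + M * k)‖ ≤ 2 ^ n * A / (M * |(k : ℝ)|) ^ n :=
    (ae_restrict_iff' measurableSet_Icc).2 <| ae_of_all _ fun _ hx ↦
      norm_translate_le_of_decay hf hM_pos (abs_le.2 hx) hk
  calc _ ≤ ENNReal.ofReal M ^ s.toReal⁻¹ *
          ENNReal.ofReal (2 ^ n * A / (M * |(k : ℝ)|) ^ n) := by
        simpa [sub_neg_eq_add] using eLpNorm_le_of_ae_bound h_bound
    _ ≤ ENNReal.ofReal (M ^ n) * ENNReal.ofReal (2 ^ n * A / (M * |(k : ℝ)|) ^ n) := by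
        gcongr
        exact ofReal_rpow_inv_toReal_le_ofReal_pow hsn hM
    _ = ENNReal.ofReal (2 ^ n * A / |(k : ℝ)| ^ n) := by
        rw [← ENNReal.ofReal_mul (by positivity)]
        congr 1
        rw [mul_pow]
        field_simp

theorem summable_const_div_abs_int_pow (hn : 1 < n) (c : ℝ) :
    Summable fun k : ℤ ↦ c / |(k : ℝ)| ^ n := by
  simpa [div_eq_mul_inv] using (Real.summable_one_div_int_pow.2 hn).abs.mul_left c

theorem tsum_eLpNorm_translate_Icc_le_of_decay {s : ℝ≥0∞} (hf : ∀ x, |x| ^ n * ‖f x‖ ≤ A)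
    (hn : 1 < n) (hsn : s⁻¹ ≤ n) (hM : 1 ≤ M) :
    ∑' k : ℤ, eLpNorm (fun x ↦ f (x + M * k)) s (volume.restrict (Set.Icc (-(M / 2)) (M / 2))) ≤
      eLpNorm f s volume + ENNReal.ofReal (∑' k : ℤ, 2 ^ n * A / |(k : ℝ)| ^ n) := by
  have hA : 0 ≤ A := (by positivity : 0 ≤ |(0 : ℝ)| ^ n * ‖f 0‖).trans (hf 0)
  have h_term (k : ℤ) :
      eLpNorm (fun x ↦ f (x + M * k)) s (volume.restrict (Set.Icc (-(M / 2)) (M / 2))) ≤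
        (if k = 0 then eLpNorm f s volume else 0) +
          ENNReal.ofReal (2 ^ n * A / |(k : ℝ)| ^ n) := by
    obtain rfl | hk := eq_or_ne k 0
    · simpa using le_add_right (eLpNorm_mono_measure f Measure.restrict_le_self)
    · simpa [hk] using eLpNorm_translate_Icc_le_of_decay hf hsn hM hk
  calc _ ≤ ∑' k : ℤ, ((if k = 0 then eLpNorm f s volume else 0) +
          ENNReal.ofReal (2 ^ n * A / |(k : ℝ)| ^ n)) := ENNReal.tsum_le_tsum h_term
    _ = _ := by
        rw [ENNReal.tsum_add, tsum_ite_eq,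
          ← ENNReal.ofReal_tsum_of_nonneg (fun k ↦ by positivity)
            (summable_const_div_abs_int_pow hn _)]

end Decay

section Dilation

variable {E : Type*} [NormedAddCommGroup E]

theorem eLpNorm_comp_mul_left_restrict_preimage (f : ℝ → E) (s : ℝ≥0∞) {c : ℝ} (hc : c ≠ 0)
    (S : Set ℝ) :
    eLpNorm (fun x ↦ f (c * x)) s (volume.restrict ((c * ·) ⁻¹' S)) =
      ENNReal.ofReal |c⁻¹| ^ (1 / s.toReal) * eLpNorm f s (volume.restrict S) := by
  have h_embedding : MeasurableEmbedding (c * · : ℝ → ℝ) := measurableEmbedding_mulLeft₀ hc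
  have h_map : (volume.restrict ((c * ·) ⁻¹' S)).map (c * ·) =
      ENNReal.ofReal |c⁻¹| • volume.restrict S := by
    rw [← h_embedding.restrict_map, Real.map_volume_mul_left hc, Measure.restrict_smul]
  calc _ = eLpNorm f s ((volume.restrict ((c * ·) ⁻¹' S)).map (c * ·)) :=
        h_embedding.eLpNorm_map_measure.symm
    _ = _ := by
        rw [h_map, eLpNorm_smul_measure_of_ne_zero (by simpa using hc)]
        simp

variable [NormedSpace ℝ E]

theorem eLpNorm_smul_comp_mul_add_Icc (f : ℝ → E) (s : ℝ≥0∞) {M : ℝ} (hM : 0 < M) (a : ℝ) :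
    eLpNorm (fun x ↦ M • f (M * (x + a))) s (volume.restrict (Set.Icc (-(1 / 2)) (1 / 2))) =
      ENNReal.ofReal (M ^ (1 - 1 / s.toReal)) *
        eLpNorm (fun x ↦ f (x + M * a)) s (volume.restrict (Set.Icc (-(M / 2)) (M / 2))) := by
  have h_window : Set.Icc (-(1 / 2)) (1 / 2) = (M * ·) ⁻¹' Set.Icc (-(M / 2)) (M / 2) := by
    rw [Set.preimage_const_mul_Icc₀ _ _ hM]
    congr 1 <;> field_simp
  have h_factor : ENNReal.ofReal (M ^ (1 - 1 / s.toReal)) =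
      ENNReal.ofReal M * ENNReal.ofReal |M⁻¹| ^ (1 / s.toReal) := by
    rw [abs_of_pos (inv_pos.2 hM), ENNReal.ofReal_rpow_of_pos (inv_pos.2 hM),
      ← ENNReal.ofReal_mul hM.le, Real.inv_rpow hM.le, Real.rpow_sub hM, Real.rpow_one,
      div_eq_mul_inv]
  calc _ = ENNReal.ofReal M * eLpNorm (fun x ↦ f (M * x + M * a)) s
          (volume.restrict (Set.Icc (-(1 / 2)) (1 / 2))) := by
        simp_rw [mul_add]
        rw [← Real.enorm_of_nonneg hM.le]
        exact eLpNorm_const_smul M _ s _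
    _ = _ := by
        rw [h_window, eLpNorm_comp_mul_left_restrict_preimage (fun x ↦ f (x + M * a)) s hM.ne',
          h_factor, mul_assoc]

end Dilation

section Schwartz

variable {E : Type*} [NormedAddCommGroup E] [NormedSpace ℝ E] (ψ : 𝓢(ℝ, E)) {s : ℝ≥0∞}

theorem exists_tsum_eLpNorm_translate_Icc_le (hs : s ≠ 0) :
    ∃ C : ℝ, 0 < C ∧ ∀ M : ℝ, 1 ≤ M →
      ∑' k : ℤ, eLpNorm (fun x : ℝ ↦ ψ (x + M * k)) s
          (volume.restrict (Set.Icc (-(M / 2)) (M / 2)))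
        ≤ eLpNorm (fun x : ℝ ↦ ψ x) s volume + ENNReal.ofReal C := by
  obtain ⟨m, hm⟩ := ENNReal.exists_nat_gt (ENNReal.inv_ne_top.2 hs)
  obtain ⟨n, hn, hmn⟩ : ∃ n, 1 < n ∧ m ≤ n := ⟨max 2 m, by simp, le_max_right 2 m⟩
  have hsn : s⁻¹ ≤ n := hm.le.trans (by exact_mod_cast hmn)
  obtain ⟨A, hA, h_decay⟩ := ψ.decay n 0
  have hψ (x : ℝ) : |x| ^ n * ‖ψ x‖ ≤ A := by simpa using h_decay x
  refine ⟨∑' k : ℤ, 2 ^ n * A / |(k : ℝ)| ^ n, ?_, fun M hM ↦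
    tsum_eLpNorm_translate_Icc_le_of_decay hψ hn hsn hM⟩
  exact (summable_const_div_abs_int_pow hn _).tsum_pos (fun k ↦ by positivity) 1 (by simpa using hA)

theorem exists_tsum_eLpNorm_dilate_Icc_le (hs : s ≠ 0) :
    ∃ C : ℝ, 0 < C ∧ ∀ M : ℝ, 1 ≤ M →
      ∑' k : ℤ, eLpNorm (fun x : ℝ ↦ M • ψ (M * (x + k))) s
          (volume.restrict (Set.Icc (-(1 / 2) : ℝ) (1 / 2)))
        ≤ ENNReal.ofReal (C * M ^ (1 - 1 / s.toReal)) := by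
  obtain ⟨C, hC, h_translate⟩ := exists_tsum_eLpNorm_translate_Icc_le ψ hs
  have h_finite : eLpNorm ψ s volume ≠ ∞ := (ψ.eLpNorm_lt_top s volume).ne
  refine ⟨(eLpNorm ψ s volume).toReal + C, by positivity, fun M hM ↦ ?_⟩
  have hM_pos : 0 < M := by linarith
  calc _ = ENNReal.ofReal (M ^ (1 - 1 / s.toReal)) * ∑' k : ℤ, eLpNorm (fun x ↦ ψ (x + M * k)) s
          (volume.restrict (Set.Icc (-(M / 2)) (M / 2))) := by
        simp_rw [eLpNorm_smul_comp_mul_add_Icc ψ s hM_pos, ENNReal.tsum_mul_left]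
    _ ≤ ENNReal.ofReal (M ^ (1 - 1 / s.toReal)) *
          (eLpNorm ψ s volume + ENNReal.ofReal C) := by
        gcongr
        exact h_translate M hM
    _ = _ := by
        rw [mul_comm _ (M ^ _), ENNReal.ofReal_mul (by positivity),
          ENNReal.ofReal_add ENNReal.toReal_nonneg hC.le, ENNReal.ofReal_toReal h_finite]

theorem stmt5_general (hs : s ≠ 0) :
    (∃ C : ℝ, 0 < C ∧ ∀ M : ℝ, 1 ≤ M →
      ∑' k : ℤ, eLpNorm (fun x : ℝ ↦ ψ (x + M * k)) s
          (volume.restrict (Set.Icc (-(M / 2)) (M / 2)))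
        ≤ eLpNorm (fun x : ℝ ↦ ψ x) s volume + ENNReal.ofReal C) ∧
    ∃ C' : ℝ, 0 < C' ∧ ∀ M : ℝ, 1 ≤ M →
      ∑' k : ℤ, eLpNorm (fun x : ℝ ↦ M • ψ (M * (x + k))) s
          (volume.restrict (Set.Icc (-(1 / 2) : ℝ) (1 / 2)))
        ≤ ENNReal.ofReal (C' * M ^ (1 - 1 / s.toReal)) :=
  ⟨exists_tsum_eLpNorm_translate_Icc_le ψ hs, exists_tsum_eLpNorm_dilate_Icc_le ψ hs⟩

end Schwartz

/-- Summability of the translated local `L^s` norms of a dilated Schwartz function. -/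
theorem stmt5 (ψ : 𝓢(ℝ, ℂ)) (s : ℝ≥0∞) (hs : 1 ≤ s) :
    (∃ C : ℝ, 0 < C ∧ ∀ M : ℝ, 1 ≤ M →
      ∑' k : ℤ, eLpNorm (fun x : ℝ => ψ (x + M * k)) s
          (volume.restrict (Set.Icc (-(M/2)) (M/2)))
        ≤ eLpNorm (fun x : ℝ => ψ x) s volume + ENNReal.ofReal C) ∧
    ∃ C' : ℝ, 0 < C' ∧ ∀ M : ℝ, 1 ≤ M →
      ∑' k : ℤ, eLpNorm (fun x : ℝ => (M : ℂ) * ψ (M * (x + k))) s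
          (volume.restrict (Set.Icc (-(1/2) : ℝ) (1/2)))
        ≤ ENNReal.ofReal (C' * M ^ (1 - 1 / s.toReal)) := by
  simpa only [Complex.real_smul] using stmt5_general ψ (one_pos.trans_le hs).ne'
end

section
/- Let m:ℝ²→ℂ be measurable and locally bounded, let k be a positive integer, and let f,g be Schwartz functions on ℝ with supp f̂ ⊂ [−k/2,k/2] and supp ĝ ⊂ [−k/2,k/2]. Fix u∈[−1/2,1/2] and define the absolutely summable sequences a(n)=f(k^{−1}(n+u)) and b(n)=g(k^{−1}(n+u)) for n∈ℤ, with associated absolutely convergent Fourier series P(ξ)=∑_{j∈ℤ} a(j)e^{−2πijξ} and Q(η)=∑_{j∈ℤ} b(j)e^{−2πijη}. Then for every n∈ℤ, C_m(f,g)(k^{−1}(n+u)) = ∫_{−1/2}^{1/2}∫_{−1/2}^{1/2} P(ξ)Q(η) m(kξ,kη) e^{2πin(ξ+η)} dξdη. Moreover P(ξ)=k f̂(kξ)e^{2πiuξ} for almost every ξ∈[−1/2,1/2], and likewise for Q. -/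
open MeasureTheory Complex SchwartzMap Filter
open scoped FourierTransform ENNReal NNReal Real

/-!
The function `G ξ = R f̂(R ξ) e^{2πiuξ}` has Fourier transform `w ↦ f ((u - w) / R)`, so by Poisson
summation the Fourier series with coefficients `f ((j + u) / R)` is the 1-periodisation of `G`.
Since `f̂` is supported in `[-R/2, R/2]`, only one translate of `G` is nonzero on `[-1/2, 1/2]`, and
the series coincides with `G` there. The formula for `C_m` is then the change of variables
`(ξ, η) ↦ (R ξ, R η)`.
-/

section RealAnalysis

variable {E : Type*} [NormedAddCommGroup E]

theorem summable_norm_comp_add_div_of_isBigO {f : ℝ → E} {b : ℝ} (hb : 1 < b)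
    (hf : f =O[cocompact ℝ] (|·| ^ (-b))) {R : ℝ} (hR : R ≠ 0) (u : ℝ) :
    Summable fun n : ℤ => ‖f ((n + u) / R)‖ := by
  have htends : Tendsto (fun n : ℤ => (n + u) / R) cofinite (cocompact ℝ) :=
    ((Homeomorph.addRight u).trans (Homeomorph.mulRight₀ R⁻¹ (inv_ne_zero hR))).isClosedEmbedding
      |>.tendsto_cocompact.comp Int.tendsto_coe_cofinite
  refine summable_of_isBigO ?_ (hf.comp_tendsto htends).norm_left
  refine (((Real.summable_one_div_int_add_rpow u b).2 hb).mul_left (|R| ^ b)).congr fun n => ?_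
  simp only [Function.comp_apply, abs_div]
  rw [Real.rpow_neg (by positivity), Real.div_rpow (abs_nonneg _) (abs_nonneg _), inv_div,
    mul_one_div]

variable [NormedSpace ℝ E] {R : ℝ}

theorem integral_eq_integral_smul_comp_mul_left (hR : 0 < R) (F : ℝ → E) :
    ∫ x, F x = ∫ x, R • F (R * x) := by
  rw [integral_smul, Measure.integral_comp_mul_left, abs_of_pos (inv_pos.2 hR),
    smul_inv_smul₀ hR.ne']

theorem integral_eq_setIntegral_smul_comp_mul_left (hR : 0 < R) {F : ℝ → E}
    (hF : Function.support F ⊆ Set.Icc (-(R / 2)) (R / 2)) :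
    ∫ x, F x = ∫ x in Set.Icc (-(1 / 2) : ℝ) (1 / 2), R • F (R * x) := by
  rw [integral_eq_integral_smul_comp_mul_left hR,
    setIntegral_eq_integral_of_forall_compl_eq_zero fun x hx => ?_]
  have hxF : R * x ∉ Function.support F := fun h =>
    hx ⟨by nlinarith [(hF h).1], by nlinarith [(hF h).2]⟩
  rw [Function.notMem_support.1 hxF, smul_zero]

end RealAnalysis

theorem tsum_fourier_mul_fourier_of_support_subset_Icc {G : ℝ → ℂ} (hG : Continuous G) {a b : ℝ}
    (hab : b - a ≤ 1) (hsupp : Function.support G ⊆ Set.Icc a b)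
    (hsum : Summable fun n : ℤ => 𝓕 G n) {x : ℝ} (hx : x ∈ Set.Icc a b) :
    ∑' n : ℤ, 𝓕 G n * fourier n (x : UnitAddCircle) = G x := by
  have hdecay : G =O[cocompact ℝ] (|·| ^ (-2 : ℝ)) := by
    have hcompact : HasCompactSupport G := .of_support_subset_isCompact isCompact_Icc hsupp
    rw [hasCompactSupport_iff_eventuallyEq, coclosedCompact_eq_cocompact] at hcompact
    exact hcompact.trans_isBigO (Asymptotics.isBigO_zero _ _)
  -- By continuity `G` also vanishes at the endpoints, so no translate interferes there either.
  have hopen : Function.support G ⊆ Set.Ioo a b :=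
    interior_Icc (a := a) (b := b) ▸ interior_maximal hsupp hG.isOpen_support
  have htranslate (n : ℤ) (hn : n ≠ 0) : G (x + n) = 0 := by
    refine Function.notMem_support.1 fun h => hn (Int.abs_lt_one_iff.1 ?_)
    obtain ⟨hlo, hhi⟩ := hopen h
    have : |(n : ℝ)| < 1 := abs_lt.2 ⟨by linarith [hx.2], by linarith [hx.1]⟩
    exact_mod_cast this
  rw [← Real.tsum_eq_tsum_fourier_of_rpow_decay_of_summable hG one_lt_two hdecay hsum,
    tsum_eq_single 0 htranslate, Int.cast_zero, add_zero]

/-- The dilation of `h` by `R`, normalised to preserve the integral for `0 < R`, followed by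
modulation by the frequency `u`. For band-limited `f`, its value at `h = 𝓕 f` is the closed form of
`sampleSeries f R u` on the period `[-1/2, 1/2]`. -/
noncomputable def modulatedDilation (R u : ℝ) (h : ℝ → ℂ) (ξ : ℝ) : ℂ :=
  R * h (R * ξ) * exp (2 * π * I * u * ξ)

/-- The Fourier series, in the convention `a ↦ ∑ a j e^{-2πijξ}`, of the samples
`a j = f ((j + u) / R)`. -/
noncomputable def sampleSeries (f : ℝ → ℂ) (R u ξ : ℝ) : ℂ :=
  ∑' j : ℤ, f ((j + u) / R) * exp (-(2 * π) * I * j * ξ)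

section Sampling

variable {R : ℝ} {h : ℝ → ℂ}

theorem continuous_modulatedDilation (hh : Continuous h) (R u : ℝ) :
    Continuous (modulatedDilation R u h) := by
  unfold modulatedDilation
  fun_prop

theorem support_modulatedDilation_subset (hR : 0 < R) (u : ℝ)
    (hh : Function.support h ⊆ Set.Icc (-(R / 2)) (R / 2)) :
    Function.support (modulatedDilation R u h) ⊆ Set.Icc (-(1 / 2)) (1 / 2) := by
  intro ξ hξ
  obtain ⟨hlo, hhi⟩ := hh (right_ne_zero_of_mul (left_ne_zero_of_mul hξ))
  exact ⟨by nlinarith, by nlinarith⟩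

theorem fourier_modulatedDilation (hR : 0 < R) (u : ℝ) (h : ℝ → ℂ) (w : ℝ) :
    𝓕 (modulatedDilation R u h) w = 𝓕 h ((w - u) / R) := by
  simp only [Real.fourier_real_eq_integral_exp_smul]
  symm
  rw [integral_eq_integral_smul_comp_mul_left hR]
  refine integral_congr_ae (.of_forall fun v => ?_)
  have hphase : exp (↑(-2 * π * v * w) * I) * exp (2 * π * I * u * v) =
      exp (↑(-2 * π * (R * v) * ((w - u) / R)) * I) := by
    rw [← exp_add]
    congr 1
    push_cast
    field_simp [ofReal_ne_zero.2 hR.ne']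
    ring
  simp only [modulatedDilation, smul_eq_mul, real_smul, ← hphase]
  ring

theorem fourier_modulatedDilation_fourier {f : ℝ → ℂ} (hf : Continuous f) (hfi : Integrable f)
    (hFf : Integrable (𝓕 f)) (hR : 0 < R) (u w : ℝ) :
    𝓕 (modulatedDilation R u (𝓕 f)) w = f ((-w + u) / R) := by
  rw [fourier_modulatedDilation hR, show (w - u) / R = -((-w + u) / R) by ring,
    ← Real.fourierInv_eq_fourier_neg, hf.fourierInv_fourier_eq hfi hFf]

theorem sampleSeries_eq_modulatedDilation {f : ℝ → ℂ} (hf : Continuous f) (hfi : Integrable f)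
    (hR : 0 < R) (hsupp : Function.support (𝓕 f) ⊆ Set.Icc (-(R / 2)) (R / 2)) {u : ℝ}
    (hsum : Summable fun n : ℤ => f ((n + u) / R)) {ξ : ℝ}
    (hξ : ξ ∈ Set.Icc (-(1 / 2) : ℝ) (1 / 2)) :
    sampleSeries f R u ξ = modulatedDilation R u (𝓕 f) ξ := by
  have hFf : Continuous (𝓕 f) :=
    VectorFourier.fourierIntegral_continuous Real.continuous_fourierChar continuous_inner hfi
  have hFfi : Integrable (𝓕 f) :=
    hFf.integrable_of_hasCompactSupport (.of_support_subset_isCompact isCompact_Icc hsupp)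
  have hcoeff (n : ℤ) : 𝓕 (modulatedDilation R u (𝓕 f)) n = f (((-n : ℤ) + u) / R) := by
    rw [fourier_modulatedDilation_fourier hf hfi hFfi hR, Int.cast_neg]
  have hcoeff_sum : Summable fun n : ℤ => 𝓕 (modulatedDilation R u (𝓕 f)) n := by
    simpa only [hcoeff] using! (Equiv.neg ℤ).summable_iff.2 hsum
  rw [← tsum_fourier_mul_fourier_of_support_subset_Icc (continuous_modulatedDilation hFf R u)
    (by norm_num) (support_modulatedDilation_subset hR u hsupp) hcoeff_sum hξ,
    ← (Equiv.neg ℤ).tsum_eq, sampleSeries]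
  refine tsum_congr fun n => ?_
  rw [hcoeff, fourier_coe_apply, Equiv.neg_apply, neg_neg]
  congr 2
  push_cast
  ring

theorem Cm_eq_setIntegral_modulatedDilation (m : ℝ × ℝ → ℂ) (f g : 𝓢(ℝ, ℂ)) (hR : 0 < R)
    (hf : Function.support (𝓕 (f : ℝ → ℂ)) ⊆ Set.Icc (-(R / 2)) (R / 2))
    (hg : Function.support (𝓕 (g : ℝ → ℂ)) ⊆ Set.Icc (-(R / 2)) (R / 2)) (u t : ℝ) :
    Cm m f g ((t + u) / R) =
      ∫ ξ in Set.Icc (-(1 / 2) : ℝ) (1 / 2), ∫ η in Set.Icc (-(1 / 2) : ℝ) (1 / 2),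
        modulatedDilation R u (𝓕 (f : ℝ → ℂ)) ξ * modulatedDilation R u (𝓕 (g : ℝ → ℂ)) η *
          m (R * ξ, R * η) * exp (2 * π * I * t * (ξ + η)) := by
  have hphase (ξ η : ℝ) :
      exp (2 * π * I * ↑((t + u) / R) * (↑(R * ξ) + ↑(R * η))) =
        exp (2 * π * I * u * ξ) * exp (2 * π * I * u * η) * exp (2 * π * I * t * (ξ + η)) := by
    rw [← exp_add, ← exp_add]
    congr 1
    push_cast
    field_simp [ofReal_ne_zero.2 hR.ne']
    ring
  rw [Cm, integral_eq_setIntegral_smul_comp_mul_left hR]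
  · refine setIntegral_congr_fun measurableSet_Icc fun ξ _ => ?_
    rw [integral_eq_setIntegral_smul_comp_mul_left hR, ← integral_smul]
    · refine setIntegral_congr_fun measurableSet_Icc fun η _ => ?_
      simp only [hphase, modulatedDilation, real_smul]
      ring
    · exact fun η hη => hg fun hη0 => hη (by simp [hη0])
  · exact fun ξ hξ => hf fun hξ0 => hξ (by simp [hξ0])

end Sampling

theorem stmt14_general (m : ℝ × ℝ → ℂ) {R : ℝ} (hR : 0 < R) (f g : 𝓢(ℝ, ℂ))
    (hf : Function.support (𝓕 (f : ℝ → ℂ)) ⊆ Set.Icc (-(R / 2)) (R / 2))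
    (hg : Function.support (𝓕 (g : ℝ → ℂ)) ⊆ Set.Icc (-(R / 2)) (R / 2)) (u : ℝ) :
    Summable (fun n : ℤ => ‖f ((n + u) / R)‖) ∧
    Summable (fun n : ℤ => ‖g ((n + u) / R)‖) ∧
    (∀ n : ℤ, Cm m f g ((n + u) / R) =
      ∫ ξ in Set.Icc (-(1 / 2) : ℝ) (1 / 2), ∫ η in Set.Icc (-(1 / 2) : ℝ) (1 / 2),
        sampleSeries f R u ξ * sampleSeries g R u η * m (R * ξ, R * η) *
          exp (2 * π * I * n * (ξ + η))) ∧
    (∀ ξ ∈ Set.Icc (-(1 / 2) : ℝ) (1 / 2),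
      sampleSeries f R u ξ = modulatedDilation R u (𝓕 (f : ℝ → ℂ)) ξ) ∧
    ∀ η ∈ Set.Icc (-(1 / 2) : ℝ) (1 / 2),
      sampleSeries g R u η = modulatedDilation R u (𝓕 (g : ℝ → ℂ)) η := by
  have hsum (h : 𝓢(ℝ, ℂ)) : Summable fun n : ℤ => ‖h ((n + u) / R)‖ :=
    summable_norm_comp_add_div_of_isBigO one_lt_two (h.isBigO_cocompact_rpow (-2)) hR.ne' u
  have hseries (h : 𝓢(ℝ, ℂ))
      (hh : Function.support (𝓕 (h : ℝ → ℂ)) ⊆ Set.Icc (-(R / 2)) (R / 2)) :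
      ∀ ξ ∈ Set.Icc (-(1 / 2) : ℝ) (1 / 2),
        sampleSeries h R u ξ = modulatedDilation R u (𝓕 (h : ℝ → ℂ)) ξ := fun _ hξ =>
    sampleSeries_eq_modulatedDilation h.continuous h.integrable hR hh (hsum h).of_norm hξ
  refine ⟨hsum f, hsum g, fun n => ?_, hseries f hf, hseries g hg⟩
  rw [Cm_eq_setIntegral_modulatedDilation m f g hR hf hg u n]
  refine setIntegral_congr_fun measurableSet_Icc fun ξ hξ => ?_
  refine setIntegral_congr_fun measurableSet_Icc fun η hη => ?_
  rw [hseries f hf ξ hξ, hseries g hg η hη, ofReal_intCast]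

/-- Sampling relation: for `f,g` Schwartz with `supp f̂, supp ĝ ⊆ [−k/2,k/2]` and
`u ∈ [−1/2,1/2]`, the samples `a(n) = f((n+u)/k)`, `b(n) = g((n+u)/k)` are absolutely summable,
`C_m(f,g)((n+u)/k)` is given by the discrete bilinear integral of the associated Fourier series
`P, Q`, and `P(ξ) = k f̂(kξ) e^{2πiuξ}` a.e. on `[−1/2,1/2]` (likewise for `Q`). -/
theorem stmt14 (m : ℝ × ℝ → ℂ) (hm : Measurable m) (hloc : LocallyBounded m)
    (k : ℕ) (hk : 0 < k) (f g : 𝓢(ℝ, ℂ))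
    (hf : tsupport (𝓕 (f : ℝ → ℂ)) ⊆ Set.Icc (-((k : ℝ)/2)) ((k : ℝ)/2))
    (hg : tsupport (𝓕 (g : ℝ → ℂ)) ⊆ Set.Icc (-((k : ℝ)/2)) ((k : ℝ)/2))
    (u : ℝ) (hu : u ∈ Set.Icc (-(1/2) : ℝ) (1/2)) :
    Summable (fun n : ℤ => ‖f (((n : ℝ) + u) / k)‖) ∧
    Summable (fun n : ℤ => ‖g (((n : ℝ) + u) / k)‖) ∧
    (∀ n : ℤ,
      Cm m f g (((n : ℝ) + u) / k) =
        ∫ ξ in Set.Icc (-(1/2) : ℝ) (1/2), ∫ η in Set.Icc (-(1/2) : ℝ) (1/2),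
          (∑' j : ℤ, f (((j : ℝ) + u) / k) *
              Complex.exp (-(2 * Real.pi) * Complex.I * (j : ℂ) * (ξ : ℂ))) *
            (∑' j : ℤ, g (((j : ℝ) + u) / k) *
              Complex.exp (-(2 * Real.pi) * Complex.I * (j : ℂ) * (η : ℂ))) *
            m ((k : ℝ) * ξ, (k : ℝ) * η) *
            Complex.exp (2 * Real.pi * Complex.I * (n : ℂ) * ((ξ : ℂ) + (η : ℂ)))) ∧
    (∀ᵐ (ξ : ℝ) ∂(volume.restrict (Set.Icc (-(1/2) : ℝ) (1/2))),
      (∑' j : ℤ, f (((j : ℝ) + u) / k) *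
          Complex.exp (-(2 * Real.pi) * Complex.I * (j : ℂ) * (ξ : ℂ))) =
        (k : ℂ) * 𝓕 (f : ℝ → ℂ) ((k : ℝ) * ξ) *
          Complex.exp (2 * Real.pi * Complex.I * (u : ℂ) * (ξ : ℂ))) ∧
    ∀ᵐ (η : ℝ) ∂(volume.restrict (Set.Icc (-(1/2) : ℝ) (1/2))),
      (∑' j : ℤ, g (((j : ℝ) + u) / k) *
          Complex.exp (-(2 * Real.pi) * Complex.I * (j : ℂ) * (η : ℂ))) =
        (k : ℂ) * 𝓕 (g : ℝ → ℂ) ((k : ℝ) * η) *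
          Complex.exp (2 * Real.pi * Complex.I * (u : ℂ) * (η : ℂ)) := by
  obtain ⟨hsf, hsg, hCm, hP, hQ⟩ := stmt14_general m (Nat.cast_pos.2 hk) f g
    ((subset_tsupport _).trans hf) ((subset_tsupport _).trans hg) u
  exact ⟨hsf, hsg, hCm, ae_restrict_of_forall_mem measurableSet_Icc hP,
    ae_restrict_of_forall_mem measurableSet_Icc hQ⟩
end
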